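/- The number of vertices of the convex hull of the set of lattice points in Z^d within Euclidean distance r of the origin is Θ(r^{d(d−1)/(d+1)}); in particular for d = 2 it is Θ(r^{2/3}). -/

import Mathlib

/-- `V_d(r)`: the set of lattice points of `ℤ^d` that are vertices (extreme points)
of the convex hull of `B_d(r) = {p ∈ ℤ^d : ‖p‖₂ ≤ r}`. -/
def Vd (d r : ℕ) : Set (Fin d → ℤ) :=
  {p | (fun i => (p i : ℝ)) ∈ Set.extremePoints ℝ (convexHull ℝ
      {x : Fin d → ℝ | ∃ q : Fin d → ℤ,
        (∑ i, (q i : ℝ) ^ 2) ≤ (r : ℝ) ^ 2 ∧ x = fun i => (q i : ℝ)})}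


lemma exists_extreme_max {d : ℕ} (K : Set (Fin d → ℝ)) (hK : IsCompact K) (hne : K.Nonempty)
    (w : Fin d → ℝ) : ∃ e ∈ K.extremePoints ℝ, ∀ y ∈ K, w ⬝ᵥ y ≤ w ⬝ᵥ e := by
  let l : (Fin d → ℝ) →L[ℝ] ℝ := LinearMap.toContinuousLinearMap (dotProductBilin ℝ ℝ w)
  have hl : ∀ x, l x = w ⬝ᵥ x := fun x => rfl
  have hex : IsExposed ℝ K (l.toExposed K) := ContinuousLinearMap.toExposed.isExposed
  have hc : IsCompact (l.toExposed K) := hex.isCompact hK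
  obtain ⟨m, hm, hmax⟩ := hK.exists_isMaxOn hne l.continuous.continuousOn
  have hn : (l.toExposed K).Nonempty := ⟨m, hm, fun y hy => hmax hy⟩
  obtain ⟨e, he⟩ := hc.extremePoints_nonempty hn
  refine ⟨e, hex.isExtreme.extremePoints_subset_extremePoints he, ?_⟩
  intro y hy
  exact (extremePoints_subset he).2 y hy

lemma polar_vertex {d : ℕ} (X : Set (Fin d → ℝ)) (hX : X.Finite) (h0 : (0 : Fin d → ℝ) ∈ X)
    (R : ℝ) (hR : ∀ f : Fin d → ℝ, (∀ x ∈ X, f ⬝ᵥ x ≤ 1) → ∀ i, |f i| ≤ R)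
    (v : Fin d → ℝ) (hv : v ∉ convexHull ℝ X) :
    ∃ f : Fin d → ℝ, (∀ x ∈ X, f ⬝ᵥ x ≤ 1) ∧ 1 < f ⬝ᵥ v ∧
      ∃ p : Fin d → (Fin d → ℝ), (∀ i, p i ∈ X ∧ f ⬝ᵥ p i = 1) ∧ LinearIndependent ℝ p := by
  set K : Set (Fin d → ℝ) := {f | ∀ x ∈ X, f ⬝ᵥ x ≤ 1} with hKdef
  have hcont : ∀ x : Fin d → ℝ, Continuous fun f : Fin d → ℝ => f ⬝ᵥ x := by
    intro x; unfold dotProduct; fun_prop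
  have hKclosed : IsClosed K := by
    have : K = ⋂ x ∈ X, {f | f ⬝ᵥ x ≤ 1} := by ext f; simp [hKdef]
    rw [this]
    exact isClosed_biInter fun x _ => isClosed_le (hcont x) continuous_const
  have hKc : IsCompact K := by
    refine (isCompact_univ_pi (fun _ : Fin d => isCompact_Icc (a := -R) (b := R))).of_isClosed_subset
      hKclosed ?_
    intro f hf i _
    exact abs_le.1 (hR f hf i)
  have hKne : K.Nonempty := ⟨0, by intro x _; simp⟩
  obtain ⟨e, he, hmax⟩ := exists_extreme_max K hKc hKne v
  have heK : e ∈ K := extremePoints_subset he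
  refine ⟨e, heK, ?_, ?_⟩
  · obtain ⟨g, u, hg, hu⟩ := geometric_hahn_banach_closed_point (convex_convexHull ℝ X)
      (hX.isCompact_convexHull ℝ).isClosed hv
    have hu0 : 0 < u := by simpa using hg 0 (subset_convexHull ℝ X h0)
    let g' : Fin d → ℝ := fun i => g (Pi.single i 1)
    have hg' : ∀ x, g x = g' ⬝ᵥ x := by
      intro x
      conv_lhs => rw [pi_eq_sum_univ' x]
      simp only [map_sum, map_smul, dotProduct, smul_eq_mul, g']
      exact Finset.sum_congr rfl fun i _ => mul_comm _ _
    have hmem : u⁻¹ • g' ∈ K := by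
      intro x hx
      rw [smul_dotProduct, ← hg', smul_eq_mul, inv_mul_le_iff₀ hu0, mul_one]
      exact (hg x (subset_convexHull ℝ X hx)).le
    have h1 := hmax _ hmem
    rw [dotProduct_comm v, dotProduct_comm v, smul_dotProduct, ← hg', smul_eq_mul] at h1
    refine lt_of_lt_of_le ?_ h1
    rw [lt_inv_mul_iff₀ hu0, mul_one]; exact hu
  · set Y : Set (Fin d → ℝ) := {x ∈ X | e ⬝ᵥ x = 1} with hY
    have hspan : Submodule.span ℝ Y = ⊤ := by
      by_contra hne
      have hlt : Submodule.span ℝ Y < ⊤ := lt_top_iff_ne_top.2 hne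
      obtain ⟨φ, hφ0, hφ⟩ := Submodule.exists_le_ker_of_lt_top _ hlt
      let g : Fin d → ℝ := fun i => φ (Pi.single i 1)
      have hg : ∀ x, φ x = g ⬝ᵥ x := by
        intro x
        conv_lhs => rw [pi_eq_sum_univ' x]
        simp only [map_sum, map_smul, dotProduct, smul_eq_mul, g]
        exact Finset.sum_congr rfl fun i _ => mul_comm _ _
      have hgY : ∀ x ∈ Y, g ⬝ᵥ x = 0 := by
        intro x hx; rw [← hg]; exact hφ (Submodule.subset_span hx)
      have hg0 : g ≠ 0 := by
        intro h; apply hφ0; ext x; simp [hg, h]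
      -- small eps
      have hev : ∀ x ∈ X, ∀ᶠ ε : ℝ in nhds 0, (e + ε • g) ⬝ᵥ x ≤ 1 := by
        intro x hx
        by_cases hxY : e ⬝ᵥ x = 1
        · filter_upwards with ε
          rw [add_dotProduct, smul_dotProduct, hgY x ⟨hx, hxY⟩, hxY]; simp
        · have hlt : e ⬝ᵥ x < 1 := lt_of_le_of_ne (heK x hx) hxY
          have hc : Continuous fun ε : ℝ => (e + ε • g) ⬝ᵥ x := by
            simp only [add_dotProduct, smul_dotProduct]; fun_prop
          have := hc.tendsto 0
          simp only [zero_smul, add_zero] at this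
          exact (this.eventually (gt_mem_nhds hlt)).mono fun _ h => h.le
      have hev2 : ∀ᶠ ε : ℝ in nhds 0, e + ε • g ∈ K := by
        have := (Filter.eventually_all_finite hX).2 hev
        exact this
      have hev3 : ∀ᶠ ε : ℝ in nhds 0, e + (-ε) • g ∈ K := by
        have h : Filter.Tendsto (fun ε : ℝ => -ε) (nhds 0) (nhds 0) := by
          simpa using (continuous_neg (G := ℝ)).tendsto 0
        exact h.eventually hev2
      have hpos := (hev2.and hev3).filter_mono (nhdsWithin_le_nhds (s := Set.Ioi (0:ℝ)))
      obtain ⟨ε, ⟨h1, h2⟩, hε⟩ := (hpos.and self_mem_nhdsWithin).exists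
      have hε : 0 < ε := hε
      have := (mem_extremePoints.1 he).2 _ h1 _ h2 ⟨1/2, 1/2, by norm_num, by norm_num, by norm_num, by
        ext i; simp; ring⟩
      apply hg0
      have h3 : ε • g = 0 := by simpa using this.1
      exact (smul_eq_zero.1 h3).resolve_left hε.ne'
    obtain ⟨b, hbY, hbspan, hbli⟩ := exists_linearIndependent ℝ Y
    rw [hspan] at hbspan
    let B : Module.Basis b ℝ (Fin d → ℝ) := Module.Basis.mk hbli (by simp [hbspan])
    have hB : ∀ i, B i = (i : Fin d → ℝ) := fun i => by simp [B]
    have : Fintype b := FiniteDimensional.fintypeBasisIndex B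
    have hcard : Fintype.card b = d := by
      have := Module.finrank_eq_card_basis B
      simpa using this.symm
    let E : Fin d ≃ b := (Fintype.equivFinOfCardEq hcard).symm
    refine ⟨fun i => (E i : Fin d → ℝ), fun i => ?_, ?_⟩
    · exact hbY (E i).2
    · exact hbli.comp E E.injective

open MeasureTheory in
lemma packing (d : ℕ) : ∃ κ : ℝ, 0 < κ ∧ ∀ {α : Type} (T : Finset α) (f : α → Fin d → ℝ)
    (p : α → Fin d → Fin d → ℝ) (r δ : ℝ), 0 ≤ r → 0 ≤ δ →
    (∀ t ∈ T, LinearIndependent ℝ (p t)) → (∀ t ∈ T, ∀ i, f t ⬝ᵥ p t i = 1) →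
    (∀ t ∈ T, ∀ t' ∈ T, ∀ i, f t ⬝ᵥ p t' i ≤ 1) → Set.InjOn f T →
    (∀ t ∈ T, ∀ i j, |p t i j| ≤ r) → (∀ t ∈ T, δ ≤ |(Matrix.of (p t)).det|) →
    T.card * δ * κ ≤ (2 * r) ^ d := by
  set Δ : Set (Fin d → ℝ) := {l | (∀ i, 0 < l i) ∧ ∑ i, l i < 1} with hΔ
  have hopen : IsOpen Δ := by
    have : Δ = (⋂ i, {l | 0 < l i}) ∩ {l | ∑ i, l i < 1} := by ext l; simp [hΔ]
    rw [this]
    refine IsOpen.inter (isOpen_iInter_of_finite fun i => isOpen_lt continuous_const (continuous_apply i)) ?_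
    exact isOpen_lt (by fun_prop) continuous_const
  have hne : Δ.Nonempty := by
    refine ⟨fun _ => 1 / (d + 1), fun i => by positivity, ?_⟩
    simp only [Finset.sum_const, Finset.card_univ, Fintype.card_fin, nsmul_eq_mul]
    rw [mul_one_div, div_lt_one (by positivity)]; linarith
  have hΔsub : Δ ⊆ Set.Icc 0 1 := by
    intro l hl
    refine ⟨fun i => (hl.1 i).le, fun i => ?_⟩
    exact (Finset.single_le_sum (fun j _ => (hl.1 j).le) (Finset.mem_univ i)).trans hl.2.le
  have hfin : volume Δ ≠ ⊤ := ((measure_mono hΔsub).trans_lt (isCompact_Icc.measure_lt_top)).ne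
  have hpos : 0 < volume Δ := hopen.measure_pos volume hne
  refine ⟨(volume Δ).toReal, ENNReal.toReal_pos hpos.ne' hfin, ?_⟩
  intro α T f p r δ hr hδ hli hf1 hfle hinj hp hdet
  let L : α → (Fin d → ℝ) →ₗ[ℝ] (Fin d → ℝ) := fun t => Matrix.toLin' (Matrix.of (p t)).transpose
  have hL : ∀ t l, L t l = ∑ i, l i • p t i := by
    intro t l; ext j
    simp [L, Matrix.mulVec, dotProduct, mul_comm]
  have hLdet : ∀ t, LinearMap.det (L t) = (Matrix.of (p t)).det := by
    intro t; simp [L, LinearMap.det_toLin']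
  have hLinj : ∀ t ∈ T, Function.Injective (L t) := by
    intro t ht
    rw [← LinearMap.ker_eq_bot, LinearMap.ker_eq_bot']
    intro l hl
    rw [hL] at hl
    funext i
    exact Fintype.linearIndependent_iff.1 (hli t ht) l hl i
  have hmeas : ∀ t ∈ T, MeasurableSet (L t '' Δ) := by
    intro t ht
    exact hopen.measurableSet.image_of_continuousOn_injOn
      (L t).continuous_of_finiteDimensional.continuousOn (hLinj t ht).injOn
  have hdot : ∀ t t' l, f t ⬝ᵥ L t' l = ∑ i, l i * (f t ⬝ᵥ p t' i) := by
    intro t t' l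
    rw [hL, dotProduct_sum]; simp [dotProduct_smul]
  have hdisj : (T : Set α).PairwiseDisjoint (fun t => L t '' Δ) := by
    intro t ht t' ht' hne
    rw [Function.onFun, Set.disjoint_left]
    rintro y ⟨l, hl, rfl⟩ ⟨l', hl', heq⟩
    apply hne
    apply hinj ht ht'
    have e1 : f t ⬝ᵥ L t l = ∑ i, l i := by
      rw [hdot]; exact Finset.sum_congr rfl fun i _ => by rw [hf1 t ht]; ring
    have e2 : f t' ⬝ᵥ L t' l' = ∑ i, l' i := by
      rw [hdot]; exact Finset.sum_congr rfl fun i _ => by rw [hf1 t' ht']; ring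
    have i1 : f t ⬝ᵥ L t' l' ≤ ∑ i, l' i := by
      rw [hdot]
      exact Finset.sum_le_sum fun i _ => mul_le_of_le_one_right (hl'.1 i).le (hfle t ht t' ht' i)
    have i2 : f t' ⬝ᵥ L t l ≤ ∑ i, l i := by
      rw [hdot]
      exact Finset.sum_le_sum fun i _ => mul_le_of_le_one_right (hl.1 i).le (hfle t' ht' t ht i)
    have e3 : f t' ⬝ᵥ L t l = ∑ i, l i := by
      rw [heq] at *; linarith
    have h0 : ∑ i, l i * (1 - f t' ⬝ᵥ p t i) = 0 := by
      rw [hdot] at e3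
      simp only [mul_sub, Finset.sum_sub_distrib, mul_one]; linarith
    rw [Finset.sum_eq_zero_iff_of_nonneg (fun i _ => mul_nonneg (hl.1 i).le
      (by linarith [hfle t' ht' t ht i]))] at h0
    have h1 : ∀ i, (f t - f t') ⬝ᵥ p t i = 0 := by
      intro i
      have := (mul_eq_zero.1 (h0 i (Finset.mem_univ i))).resolve_left (hl.1 i).ne'
      rw [sub_dotProduct, hf1 t ht]; linarith
    have hsurj : Function.Surjective (L t) := LinearMap.injective_iff_surjective.1 (hLinj t ht)
    obtain ⟨c, hc⟩ := hsurj (f t - f t')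
    have : (f t - f t') ⬝ᵥ (f t - f t') = 0 := by
      nth_rewrite 2 [← hc]
      rw [hL, dotProduct_sum]; simp [dotProduct_smul, h1]
    exact sub_eq_zero.1 (dotProduct_self_eq_zero.1 this)
  have hsub : (⋃ t ∈ T, L t '' Δ) ⊆ Set.Icc (fun _ => -r) (fun _ => r) := by
    intro y hy
    simp only [Set.mem_iUnion] at hy
    obtain ⟨t, ht, l, hl, rfl⟩ := hy
    have : ∀ j, |L t l j| ≤ r := by
      intro j
      rw [hL, Finset.sum_apply]
      calc |∑ i, (l i • p t i) j| ≤ ∑ i, |(l i • p t i) j| := Finset.abs_sum_le_sum_abs _ _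
        _ ≤ ∑ i, l i * r := Finset.sum_le_sum fun i _ => by
            rw [Pi.smul_apply, smul_eq_mul, abs_mul, abs_of_pos (hl.1 i)]
            exact mul_le_mul_of_nonneg_left (hp t ht i j) (hl.1 i).le
        _ ≤ r := by rw [← Finset.sum_mul]; exact mul_le_of_le_one_left hr hl.2.le
    exact ⟨fun j => (abs_le.1 (this j)).1, fun j => (abs_le.1 (this j)).2⟩
  have hm := measure_mono (μ := volume) hsub
  rw [measure_biUnion_finset hdisj hmeas, Real.volume_Icc_pi] at hm
  have h2 : ∑ t ∈ T, ENNReal.ofReal δ * volume Δ ≤ ∑ t ∈ T, volume (L t '' Δ) := by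
    refine Finset.sum_le_sum fun t ht => ?_
    rw [Measure.addHaar_image_linearMap, hLdet]
    gcongr
    exact hdet t ht
  have h3 := h2.trans hm
  rw [Finset.sum_const, Finset.prod_const, Finset.card_univ, Fintype.card_fin, ← ENNReal.ofReal_pow (by linarith), nsmul_eq_mul] at h3
  have h4 := ENNReal.toReal_mono ENNReal.ofReal_ne_top h3
  rw [ENNReal.toReal_mul, ENNReal.toReal_mul, ENNReal.toReal_ofReal hδ, ENNReal.toReal_ofReal (by apply pow_nonneg; linarith), ENNReal.toReal_natCast] at h4
  calc _ = T.card * (δ * (volume Δ).toReal) := by ring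
    _ ≤ _ := h4
    _ = _ := by ring

def latS (d r : ℕ) : Set (Fin d → ℝ) := {x : Fin d → ℝ | ∃ q : Fin d → ℤ,
        (∑ i, (q i : ℝ) ^ 2) ≤ (r : ℝ) ^ 2 ∧ x = fun i => (q i : ℝ)}

lemma mem_Vd {d r : ℕ} {p : Fin d → ℤ} :
    p ∈ Vd d r ↔ (fun i => (p i : ℝ)) ∈ Set.extremePoints ℝ (convexHull ℝ (latS d r)) := Iff.rfl

lemma coord_le {d r : ℕ} {q : Fin d → ℤ} (h : (∑ i, (q i : ℝ) ^ 2) ≤ (r : ℝ) ^ 2) (i : Fin d) :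
    |q i| ≤ r := by
  have h1 : (q i : ℝ) ^ 2 ≤ (r : ℝ) ^ 2 :=
    (Finset.single_le_sum (f := fun i => (q i : ℝ) ^ 2) (fun j _ => sq_nonneg _) (Finset.mem_univ i)).trans h
  have h2 := abs_le_of_sq_le_sq h1 (by positivity)
  exact_mod_cast h2

lemma ball_finite (d r : ℕ) : {q : Fin d → ℤ | (∑ i, (q i : ℝ) ^ 2) ≤ (r : ℝ) ^ 2}.Finite := by
  refine (Set.finite_Icc (fun _ : Fin d => -(r : ℤ)) (fun _ => (r : ℤ))).subset ?_
  intro q hq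
  exact ⟨fun i => (abs_le.1 (coord_le hq i)).1, fun i => (abs_le.1 (coord_le hq i)).2⟩

lemma latS_finite (d r : ℕ) : (latS d r).Finite := by
  refine ((ball_finite d r).image (fun q i => (q i : ℝ))).subset ?_
  rintro x ⟨q, hq, rfl⟩
  exact ⟨q, hq, rfl⟩

lemma Vd_subset {d r : ℕ} {p : Fin d → ℤ} (hp : p ∈ Vd d r) :
    (∑ i, (p i : ℝ) ^ 2) ≤ (r : ℝ) ^ 2 := by
  obtain ⟨q, hq, h⟩ := extremePoints_convexHull_subset (mem_Vd.1 hp)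
  have : p = q := by funext i; exact_mod_cast congrFun h i
  rw [this]; exact hq

lemma Vd_finite (d r : ℕ) : (Vd d r).Finite := (ball_finite d r).subset fun _ h => Vd_subset h

def midX (d r : ℕ) : Set (Fin d → ℝ) := {x | ∃ p q : Fin d → ℤ, p ≠ q ∧
  (∑ i, (p i : ℝ) ^ 2) ≤ (r : ℝ) ^ 2 ∧ (∑ i, (q i : ℝ) ^ 2) ≤ (r : ℝ) ^ 2 ∧
  x = fun i => ((p i + q i : ℤ) : ℝ) / 2}

lemma midX_finite (d r : ℕ) : (midX d r).Finite := by
  refine (((ball_finite d r).prod (ball_finite d r)).image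
    (fun (a : (Fin d → ℤ) × (Fin d → ℤ)) i => ((a.1 i + a.2 i : ℤ) : ℝ) / 2)).subset ?_
  rintro x ⟨p, q, -, hp, hq, rfl⟩
  exact ⟨(p, q), ⟨hp, hq⟩, rfl⟩

lemma single_mem {d r : ℕ} (i : Fin d) (s : ℤ) (hs : s ^ 2 = 1) :
    (∑ j, (((Pi.single i (s * r) : Fin d → ℤ) j : ℤ) : ℝ) ^ 2) ≤ (r : ℝ) ^ 2 := by
  rw [Finset.sum_eq_single i]
  · simp only [Pi.single_eq_same]; push_cast
    rw [mul_pow]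
    have : (s : ℝ) ^ 2 = 1 := by exact_mod_cast hs
    rw [this, one_mul]
  · intro b _ hb; simp [Pi.single_eq_of_ne hb]
  · simp

lemma midX_zero {d r : ℕ} (hd : 2 ≤ d) (hr : 1 ≤ r) : (0 : Fin d → ℝ) ∈ midX d r := by
  let i : Fin d := ⟨0, by omega⟩
  refine ⟨Pi.single i (1 * r), Pi.single i (-1 * r), ?_, single_mem i 1 (by norm_num),
    single_mem i (-1) (by norm_num), ?_⟩
  · intro h
    have := congrFun h i
    simp at this; omega
  · ext j
    by_cases hj : j = i
    · subst hj; simp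
    · simp [Pi.single_eq_of_ne hj]

lemma midX_bound {d r : ℕ} (hd : 2 ≤ d) (hr : 1 ≤ r) (f : Fin d → ℝ)
    (hf : ∀ x ∈ midX d r, f ⬝ᵥ x ≤ 1) (i : Fin d) : |f i| ≤ 2 / r := by
  have hr0 : (0 : ℝ) < r := by exact_mod_cast hr
  obtain ⟨j, hj⟩ : ∃ j : Fin d, j ≠ i := by
    have : Nontrivial (Fin d) := Fin.nontrivial_iff_two_le.2 hd
    exact exists_ne i
  have key : ∀ s t : ℤ, s ^ 2 = 1 → t ^ 2 = 1 → f i * (s * r) / 2 + f j * (t * r) / 2 ≤ 1 := by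
    intro s t hs ht
    have := hf _ ⟨Pi.single i (s * r), Pi.single j (t * r), ?_, single_mem i s hs, single_mem j t ht, rfl⟩
    · convert this using 1
      have e : ∀ k, f k * ((((Pi.single i (s * r) : Fin d → ℤ) k + (Pi.single j (t * r) : Fin d → ℤ) k : ℤ) : ℝ) / 2)
          = (Pi.single i (f i * (s * r) / 2) : Fin d → ℝ) k + (Pi.single j (f j * (t * r) / 2) : Fin d → ℝ) k := by
        intro k
        by_cases hk : k = i
        · subst hk; simp [Pi.single_eq_of_ne hj.symm]; ring
        · by_cases hk' : k = j
          · subst hk'; simp [Pi.single_eq_of_ne hj]; ring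
          · simp [Pi.single_eq_of_ne hk, Pi.single_eq_of_ne hk']
      simp only [dotProduct, e, Finset.sum_add_distrib]
      simp
    · intro h
      have := congrFun h i
      rw [Pi.single_eq_same, Pi.single_eq_of_ne hj.symm] at this
      have hs0 : s ≠ 0 := by rintro rfl; norm_num at hs
      have : s = 0 ∨ (r:ℤ) = 0 := mul_eq_zero.1 this
      omega
  have h1 := key 1 1 (by norm_num) (by norm_num)
  have h2 := key 1 (-1) (by norm_num) (by norm_num)
  have h3 := key (-1) 1 (by norm_num) (by norm_num)
  have h4 := key (-1) (-1) (by norm_num) (by norm_num)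
  push_cast at h1 h2 h3 h4
  rw [abs_le, ← neg_div, div_le_iff₀ hr0, le_div_iff₀ hr0]
  constructor <;> linarith

lemma Vd_not_mem {d r : ℕ} {v : Fin d → ℤ} (hv : v ∈ Vd d r) :
    (fun i => (v i : ℝ)) ∉ convexHull ℝ (midX d r) := by
  intro h
  rw [mem_Vd] at hv
  have hmid : ∀ p : Fin d → ℤ, (∑ i, (p i : ℝ) ^ 2) ≤ (r : ℝ) ^ 2 →
      (fun i => (p i : ℝ)) ∈ convexHull ℝ (latS d r) :=
    fun p hp => subset_convexHull ℝ _ ⟨p, hp, rfl⟩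
  have hsegm : ∀ p q : Fin d → ℤ, (fun i => ((p i + q i : ℤ) : ℝ) / 2) ∈
      openSegment ℝ (fun i => (p i : ℝ)) (fun i => (q i : ℝ)) := by
    intro p q
    refine ⟨1/2, 1/2, by norm_num, by norm_num, by norm_num, ?_⟩
    ext i; simp; ring
  have hsub : convexHull ℝ (midX d r) ⊆ convexHull ℝ (latS d r) := by
    refine convexHull_min ?_ (convex_convexHull ℝ _)
    rintro x ⟨p, q, -, hp, hq, rfl⟩
    exact (convex_convexHull ℝ _).openSegment_subset (hmid p hp) (hmid q hq) (hsegm p q)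
  have h2 := extremePoints_convexHull_subset
    (inter_extremePoints_subset_extremePoints_of_subset hsub ⟨h, hv⟩)
  obtain ⟨p, q, hne, hp, hq, heq⟩ := h2
  have h3 := (mem_extremePoints.1 hv).2 _ (hmid p hp) _ (hmid q hq) (by rw [heq]; exact hsegm p q)
  apply hne
  funext i
  have := congrFun (h3.1.trans h3.2.symm) i
  exact_mod_cast this


lemma sign_aux (D G : ℤ) (x : ℝ) (hD : D ≠ 0) (h : (D : ℝ) * x = 2 * G) :
    |(D : ℝ)| * x = 2 * ((SignType.sign D * G : ℤ) : ℝ) := by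
  rcases lt_or_gt_of_ne hD with h' | h'
  · rw [sign_neg h', abs_of_neg (by exact_mod_cast h')]
    simp; linarith
  · rw [sign_pos h', abs_of_pos (by exact_mod_cast h')]
    simp; linarith

lemma vertex_data {d r : ℕ} (hd : 2 ≤ d) (hr : 1 ≤ r) {v : Fin d → ℤ} (hv : v ∈ Vd d r) :
    ∃ (f : Fin d → ℝ) (p : Fin d → Fin d → ℝ) (a : Fin d → ℤ) (k : ℝ),
      (∀ x ∈ midX d r, f ⬝ᵥ x ≤ 1) ∧ 1 < f ⬝ᵥ (fun i => (v i : ℝ)) ∧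
      (∀ i, p i ∈ midX d r) ∧ (∀ i, f ⬝ᵥ p i = 1) ∧ LinearIndependent ℝ p ∧
      0 < k ∧ (∀ i, k * f i = 2 * a i) ∧ k = 2 ^ d * |(Matrix.of p).det| := by
  obtain ⟨f, hf, hfv, p, hp, hli⟩ := polar_vertex (midX d r) (midX_finite d r) (midX_zero hd hr)
    (2 / r) (midX_bound hd hr) _ (Vd_not_mem hv)
  have hint : ∀ i j, ∃ m : ℤ, (m : ℝ) = 2 * p i j := by
    intro i j
    obtain ⟨x, y, -, -, -, h⟩ := (hp i).1
    exact ⟨x j + y j, by rw [h]; ring⟩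
  choose M hM using hint
  let MZ : Matrix (Fin d) (Fin d) ℤ := Matrix.of M
  let MR : Matrix (Fin d) (Fin d) ℝ := MZ.map (Int.castRingHom ℝ)
  have hMR : MR = (2 : ℝ) • Matrix.of p := by
    ext i j; simp [MR, MZ, hM]
  have hdetR : MR.det = 2 ^ d * (Matrix.of p).det := by
    rw [hMR, Matrix.det_smul]; simp
  have hdetZ : ((MZ.det : ℤ) : ℝ) = MR.det := by
    have := (Int.castRingHom ℝ).map_det MZ
    simpa [MR] using this
  have hpdet : (Matrix.of p).det ≠ 0 := by
    have : LinearIndependent ℝ (Matrix.of p).row := hli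
    rw [Matrix.linearIndependent_rows_iff_isUnit] at this
    exact ((Matrix.isUnit_iff_isUnit_det _).1 this).ne_zero
  have hMf : MR.mulVec f = fun _ => 2 := by
    ext i
    rw [hMR, Matrix.smul_mulVec]
    have := (hp i).2
    rw [dotProduct_comm] at this
    simp only [Pi.smul_apply, Matrix.mulVec, smul_eq_mul]
    have e : (fun j => Matrix.of p i j) = p i := rfl
    rw [e, this]; norm_num
  have hadj : MR.det • f = MR.adjugate.mulVec (fun _ => 2) := by
    rw [← hMf, Matrix.mulVec_mulVec, Matrix.adjugate_mul, Matrix.smul_mulVec, Matrix.one_mulVec]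
  let g : Fin d → ℤ := MZ.adjugate.mulVec (fun _ => 1)
  have hg : ∀ i, MR.det * f i = 2 * g i := by
    intro i
    have h1 := congrFun hadj i
    rw [Pi.smul_apply, smul_eq_mul] at h1
    rw [h1]
    have h2 : MR.adjugate = MZ.adjugate.map (Int.castRingHom ℝ) := by
      have := (Int.castRingHom ℝ).map_adjugate MZ
      simpa [MR] using this.symm
    rw [h2]
    simp [g, Matrix.mulVec, dotProduct, Finset.mul_sum, mul_comm]
  refine ⟨f, p, fun i => SignType.sign MZ.det * g i, |MR.det|, hf, hfv, fun i => (hp i).1,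
    fun i => (hp i).2, hli, ?_, ?_, ?_⟩
  · rw [abs_pos, hdetR]; positivity
  · intro i
    rw [← hdetZ] at hg ⊢
    refine sign_aux _ _ _ ?_ (hg i)
    intro h
    rw [h, hdetR] at hdetZ
    have : (2:ℝ) ^ d * (Matrix.of p).det ≠ 0 := by positivity
    apply this; rw [← hdetZ]; simp
  · rw [hdetR, abs_mul, abs_of_pos (by positivity)]

lemma midX_coord {d r : ℕ} {x : Fin d → ℝ} (hx : x ∈ midX d r) (j : Fin d) : |x j| ≤ r := by
  obtain ⟨p, q, -, hp, hq, rfl⟩ := hx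
  have h1 : |(p j : ℝ)| ≤ r := by exact_mod_cast coord_le hp j
  have h2 : |(q j : ℝ)| ≤ r := by exact_mod_cast coord_le hq j
  rw [abs_le] at *
  push_cast
  constructor <;> linarith

lemma upper_aux (d : ℕ) (hd : 2 ≤ d) : ∃ κ : ℝ, 0 < κ ∧ ∀ r A : ℕ, 1 ≤ r →
    ∃ N : ℕ, ((Vd d r).ncard : ℝ) ≤ (2 * A + 1) ^ d + N ∧
      N * (r * A / 2 ^ d) * κ ≤ (2 * r) ^ d := by
  obtain ⟨κ, hκ, hpack⟩ := packing d
  refine ⟨κ, hκ, ?_⟩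
  intro r A hr
  classical
  have hr0 : (0 : ℝ) < r := by exact_mod_cast hr
  have hdata : ∀ v : Fin d → ℤ, v ∈ Vd d r → _ := fun v hv => vertex_data hd hr hv
  choose! f p a k hf hfv hpX hfp hli hk hka hkd using hdata
  let V : Finset (Fin d → ℤ) := (Vd_finite d r).toFinset
  have hV : ∀ v, v ∈ V ↔ v ∈ Vd d r := fun v => by simp [V]
  have hfinj : ∀ v ∈ Vd d r, ∀ w ∈ Vd d r, f v = f w → v = w := by
    intro v hv w hw h
    by_contra hne
    have h1 := hf v hv _ ⟨v, w, hne, Vd_subset hv, Vd_subset hw, rfl⟩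
    have h2 := hfv v hv
    have h3 := hfv w hw
    rw [← h] at h3
    have e : (fun i => ((v i + w i : ℤ) : ℝ) / 2) = (1/2 : ℝ) • ((fun i => (v i : ℝ)) + (fun i => (w i : ℝ))) := by
      ext i; simp; ring
    rw [e, dotProduct_smul, dotProduct_add, smul_eq_mul] at h1
    linarith
  have hprop : ∀ v ∈ Vd d r, ∀ w ∈ Vd d r, a v = a w → k v ≤ k w := by
    intro v hv w hw h
    let i : Fin d := ⟨0, by omega⟩
    have e : k v • f v = k w • f w := by
      ext j; simp only [Pi.smul_apply, smul_eq_mul]; rw [hka v hv, hka w hw, h]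
    have e2 : k v * (f v ⬝ᵥ p v i) = k w * (f w ⬝ᵥ p v i) := by
      have := congrArg (fun g => g ⬝ᵥ p v i) e
      simpa [smul_dotProduct] using this
    rw [hfp v hv, mul_one] at e2
    rw [e2]
    exact mul_le_of_le_one_right (hk w hw).le (hf w hw _ (hpX v hv i))
  have hainj : ∀ v ∈ Vd d r, ∀ w ∈ Vd d r, a v = a w → v = w := by
    intro v hv w hw h
    apply hfinj v hv w hw
    have hkk : k v = k w := le_antisymm (hprop v hv w hw h) (hprop w hw v hv h.symm)
    ext j
    have h1 := hka v hv j
    rw [h, ← hka w hw j, hkk] at h1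
    exact mul_left_cancel₀ (hk w hw).ne' h1
  let V1 := V.filter (fun v => ∀ j, |a v j| ≤ A)
  let V2 := V.filter (fun v => ¬ ∀ j, |a v j| ≤ A)
  have hc : V1.card + V2.card = V.card := Finset.card_filter_add_card_filter_not _
  have hc1 : V1.card ≤ (2 * A + 1) ^ d := by
    have : V1.card ≤ (Fintype.piFinset (fun _ : Fin d => Finset.Icc (-(A:ℤ)) A)).card := by
      refine Finset.card_le_card_of_injOn a ?_ ?_
      · intro v hv
        have hv := (Finset.mem_filter.1 hv).2
        simp only [Finset.mem_coe, Fintype.mem_piFinset, Finset.mem_Icc]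
        exact fun j => abs_le.1 (hv j)
      · intro v hv w hw h
        exact hainj v ((hV v).1 (Finset.mem_filter.1 hv).1) w ((hV w).1 (Finset.mem_filter.1 hw).1) h
    refine this.trans (le_of_eq ?_)
    rw [Fintype.card_piFinset, Finset.prod_const, Finset.card_univ, Fintype.card_fin, Int.card_Icc]
    congr 1; omega
  refine ⟨V2.card, ?_, ?_⟩
  · rw [Set.ncard_eq_toFinset_card _ (Vd_finite d r)]
    have : V.card ≤ (2 * A + 1) ^ d + V2.card := by omega
    exact_mod_cast this
  · have hm2 : ∀ v ∈ V2, v ∈ Vd d r := fun v hv => (hV v).1 (Finset.mem_filter.1 hv).1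
    refine hpack V2 f p r (r * A / 2 ^ d) hr0.le (by positivity) (fun v hv => hli v (hm2 v hv))
      (fun v hv => hfp v (hm2 v hv)) (fun v hv w hw i => hf v (hm2 v hv) _ (hpX w (hm2 w hw) i))
      (fun v hv w hw h => hfinj v (hm2 v hv) w (hm2 w hw) h)
      (fun v hv i j => midX_coord (hpX v (hm2 v hv) i) j) ?_
    intro v hv
    have hvV := hm2 v hv
    have h1 := (Finset.mem_filter.1 hv).2
    push Not at h1
    obtain ⟨j, hj⟩ := h1
    rw [div_le_iff₀ (by positivity), mul_comm |_|, ← hkd v hvV]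
    have h2 := midX_bound hd hr (f v) (hf v hvV) j
    have h3 := congrArg abs (hka v hvV j)
    rw [abs_mul, abs_mul, abs_of_pos (hk v hvV)] at h3
    have h4 : (A : ℝ) ≤ |(a v j : ℝ)| := by exact_mod_cast hj.le
    have h5 : k v * |f v j| ≤ k v * (2 / r) := mul_le_mul_of_nonneg_left h2 (hk v hvV).le
    rw [h3, abs_two, mul_div_assoc', le_div_iff₀ hr0] at h5
    nlinarith

lemma upper_bound (d : ℕ) (hd : 2 ≤ d) : ∃ c₂ : ℝ, 0 < c₂ ∧ ∀ r : ℕ, 1 ≤ r →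
      (Set.ncard (Vd d r) : ℝ) ≤ c₂ * (r : ℝ) ^ (((d : ℝ) * ((d : ℝ) - 1)) / ((d : ℝ) + 1)) := by
  obtain ⟨κ, hκ, h⟩ := upper_aux d hd
  refine ⟨5 ^ d + 4 ^ d / κ, by positivity, ?_⟩
  intro r hr
  have hr0 : (0 : ℝ) < r := by exact_mod_cast hr
  have hr1 : (1 : ℝ) ≤ r := by exact_mod_cast hr
  have hd2 : (2 : ℝ) ≤ d := by exact_mod_cast hd
  set B : ℝ := (r : ℝ) ^ (((d : ℝ) - 1) / ((d : ℝ) + 1)) with hB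
  have hB1 : 1 ≤ B := Real.one_le_rpow hr1 (div_nonneg (by linarith) (by linarith))
  have hBd : (r : ℝ) ^ (((d : ℝ) * ((d : ℝ) - 1)) / ((d : ℝ) + 1)) = B ^ d := by
    rw [hB, ← Real.rpow_natCast, ← Real.rpow_mul hr0.le]; congr 1; field_simp
  have hBr : (r : ℝ) ^ d = r * B * B ^ d := by
    rw [mul_assoc, ← pow_succ', hB, ← Real.rpow_natCast _ (d+1), ← Real.rpow_mul hr0.le, ← Real.rpow_natCast]
    nth_rewrite 2 [← Real.rpow_one (r:ℝ)]
    rw [← Real.rpow_add hr0]; congr 1; push_cast; field_simp; ring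
  obtain ⟨N, hN1, hN2⟩ := h r ⌈B⌉₊ hr
  have hA1 : B ≤ ⌈B⌉₊ := Nat.le_ceil B
  have hA2 : (⌈B⌉₊ : ℝ) ≤ 2 * B := by
    have := Nat.ceil_lt_add_one (by linarith : 0 ≤ B); linarith
  rw [hBd]
  refine hN1.trans ?_
  have e1 : (2 * (⌈B⌉₊ : ℝ) + 1) ^ d ≤ 5 ^ d * B ^ d := by
    rw [← mul_pow]; gcongr; linarith
  have e2 : (N : ℝ) ≤ 4 ^ d / κ * B ^ d := by
    have h3 : N * (r * B / 2 ^ d) * κ ≤ (2 * r) ^ d := by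
      refine le_trans ?_ hN2; gcongr
    rw [mul_pow, hBr] at h3
    have e4 : (4 : ℝ) ^ d = 2 ^ d * 2 ^ d := by rw [← mul_pow]; norm_num
    rw [div_mul_eq_mul_div, le_div_iff₀ hκ, e4]
    have hrB : 0 < r * B := by positivity
    have h2d : (0:ℝ) < 2 ^ d := by positivity
    have h5 : N * κ * (r * B) ≤ (2 ^ d * 2 ^ d * B ^ d) * (r * B) := by
      calc N * κ * (r * B) = (N * (r * B / 2 ^ d) * κ) * 2 ^ d := by field_simp
        _ ≤ (2 ^ d * (r * B * B ^ d)) * 2 ^ d := by gcongr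
        _ = _ := by ring
    exact le_of_mul_le_mul_right h5 hrB
  rw [add_mul]; linarith


open Pointwise in
lemma sumset_cover {G : Type} [AddCommGroup G] [Fintype G] [DecidableEq G] (U : Finset G)
    (hU : U.Nonempty) (hgen : AddSubgroup.closure ((U - U : Finset G) : Set G) = ⊤) (K : ℕ)
    (hK : Fintype.card G ≤ K * U.card) (g : G) : g ∈ (2 * K) • (U - U) := by
  set D := U - U with hD
  have h0 : (0 : G) ∈ D := by
    obtain ⟨u, hu⟩ := hU
    exact Finset.mem_sub.2 ⟨u, hu, u, hu, sub_self u⟩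
  have hneg : ∀ x ∈ D, -x ∈ D := by
    intro x hx
    obtain ⟨a, ha, b, hb, rfl⟩ := Finset.mem_sub.1 hx
    exact Finset.mem_sub.2 ⟨b, hb, a, ha, by abel⟩
  have hmono : ∀ k, k • D ⊆ (k + 1) • D := by
    intro k
    rw [succ_nsmul]
    intro x hx
    exact Finset.mem_add.2 ⟨x, hx, 0, h0, add_zero x⟩
  have hstab : ∀ k, (k + 1) • D = k • D → ∀ x, x ∈ k • D := by
    intro k hk x
    have hx : x ∈ AddSubgroup.closure (D : Set G) := by rw [hgen]; trivial
    have key : ∀ y ∈ k • D, y + x ∈ k • D := by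
      induction hx using AddSubgroup.closure_induction with
      | mem z hz =>
        intro y hy
        rw [← hk, succ_nsmul]
        exact Finset.add_mem_add hy hz
      | zero => intro y hy; simpa using hy
      | add a b _ _ ha hb =>
        intro y hy
        rw [← add_assoc]; exact hb _ (ha _ hy)
      | neg a _ ha =>
        -- finite: y ↦ y + a injective on the finite set so surjective
        intro y hy
        have hsurj := Finset.surjOn_of_injOn_of_card_le (s := k • D) (t := k • D) (fun y => y + a)
          (fun y hy => ha y hy) (fun y _ z _ h => add_right_cancel h) le_rfl
        obtain ⟨z, hz, hzy⟩ := hsurj hy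
        have : y + -a = z := by rw [← hzy]; simp
        rw [this]; exact hz
    have h00 : (0 : G) ∈ k • D := by
      clear hk key hx
      induction k with
      | zero => simp
      | succ n ih => exact hmono n ih
    simpa using key 0 h00
  have hmain : ∀ j : ℕ, (∀ x, x ∈ (2 * j) • D) ∨ (j + 1) * U.card ≤ ((2 * j) • D + U).card := by
    intro j
    induction j with
    | zero => right; simp
    | succ j ih =>
      by_cases hfull : ∀ x, x ∈ (2 * (j + 1)) • D
      · exact Or.inl hfull
      right
      have e : 2 * (j + 1) = 2 * j + 1 + 1 := by ring
      have hj : ¬ ∀ x, x ∈ (2 * j) • D := by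
        intro h; apply hfull; intro x; rw [e]; exact hmono _ (hmono _ (h x))
      have ih := ih.resolve_left hj
      have hne : (2 * j + 1 + 1) • D ≠ (2 * j + 1) • D := by
        intro h; apply hfull; intro x; rw [e]; exact hmono _ (hstab _ h x)
      obtain ⟨z, hz, hz'⟩ : ∃ z ∈ (2 * j + 1 + 1) • D, z ∉ (2 * j + 1) • D := by
        by_contra hcon; push Not at hcon
        exact hne (Finset.Subset.antisymm hcon (hmono _))
      have hdisj : Disjoint ((2 * j) • D + U) (z +ᵥ U) := by
        rw [Finset.disjoint_left]
        intro x hx hx'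
        obtain ⟨y, hy, u, hu, rfl⟩ := Finset.mem_add.1 hx
        obtain ⟨u', hu', h⟩ := Finset.mem_vadd_finset.1 hx'
        apply hz'
        have : z = y + (u - u') := by
          rw [vadd_eq_add] at h; rw [← add_sub_assoc, ← h]; abel
        rw [this, succ_nsmul]
        exact Finset.add_mem_add hy (Finset.sub_mem_sub hu hu')
      have hsub : ((2 * j) • D + U) ∪ (z +ᵥ U) ⊆ (2 * (j + 1)) • D + U := by
        rw [e]
        refine Finset.union_subset (Finset.add_subset_add_right ((hmono _).trans (hmono _))) ?_
        intro x hx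
        obtain ⟨u', hu', rfl⟩ := Finset.mem_vadd_finset.1 hx
        exact Finset.add_mem_add hz hu'
      have hc := Finset.card_le_card hsub
      rw [Finset.card_union_of_disjoint hdisj, Finset.card_vadd_finset] at hc
      calc (j + 1 + 1) * U.card = (j + 1) * U.card + U.card := by ring
        _ ≤ _ := by omega
  rcases hmain K with h | h
  · exact h g
  · exfalso
    have h1 : ((2 * K) • D + U).card ≤ Fintype.card G := Finset.card_le_univ _
    have h2 : 0 < U.card := hU.card_pos
    nlinarith


lemma dot_bound {n : ℕ} (a z : Fin (n+1) → ℤ) (A t : ℤ) (ha : ∀ i, 1 ≤ a i ∧ a i ≤ A)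
    (h0 : z 0 = 0) (hz : ∀ i, |z i| ≤ t) : |a ⬝ᵥ z| ≤ n * (A * t) := by
  rw [dotProduct, Fin.sum_univ_succ, h0, mul_zero, zero_add]
  refine (Finset.abs_sum_le_sum_abs _ _).trans ?_
  calc ∑ i : Fin n, |a i.succ * z i.succ| ≤ ∑ i : Fin n, A * t := by
        refine Finset.sum_le_sum fun i _ => ?_
        rw [abs_mul]
        have h1 := ha i.succ
        have h2 := hz i.succ
        have h3 := abs_nonneg (z i.succ)
        rw [abs_of_pos (by omega)]
        gcongr
        · omega
        · omega
    _ = n * (A * t) := by simp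

open Pointwise in
lemma short_reps {n : ℕ} (hn : 1 ≤ n) (s A K : ℕ) (a : Fin (n+1) → ℤ)
    (ha : ∀ i, 1 ≤ a i ∧ a i ≤ A) (hq : (A : ℤ) ≤ 16 * a 0) (hprim : ∃ c, c ⬝ᵥ a = 1)
    (hs : 1 ≤ s) (hK : A ≤ K * (s + 1) ^ n)
    (hgood : ∀ x : Fin (n+1) → ℤ, x ≠ 0 → (∀ i, |x i| ≤ 16 * n * s) → a ⬝ᵥ x ≠ 0) (k : ℤ)
    (hk : |k| ≤ (n + 1) * A) :
    ∃ w : Fin (n+1) → ℤ, a ⬝ᵥ w = k ∧ ∀ i, |w i| ≤ 16 * (n + 1 + 2 * n * K) * s := by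
  obtain ⟨q, hqq⟩ : ∃ q : ℕ, a 0 = q := ⟨(a 0).toNat, by have := (ha 0).1; omega⟩
  have hq0 : 0 < q := by have := (ha 0).1; omega
  have hqA : q ≤ A := by have := (ha 0).2; omega
  have : NeZero q := ⟨hq0.ne'⟩
  let φ : (Fin (n+1) → ℤ) → ZMod q := fun x => ((a ⬝ᵥ x : ℤ) : ZMod q)
  have hφadd : ∀ x y, φ (x + y) = φ x + φ y := by
    intro x y; simp [φ, dotProduct_add]
  have hφsub : ∀ x y, φ (x - y) = φ x - φ y := by
    intro x y; simp [φ, dotProduct_sub]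
  let Box : Finset (Fin (n+1) → ℤ) :=
    Fintype.piFinset (fun i => if i = 0 then {0} else Finset.Icc 0 (s:ℤ))
  have hBox : ∀ x ∈ Box, x 0 = 0 ∧ ∀ i, 0 ≤ x i ∧ x i ≤ s := by
    intro x hx
    rw [Fintype.mem_piFinset] at hx
    have h0 : x 0 = 0 := by simpa using hx 0
    refine ⟨h0, fun i => ?_⟩
    by_cases hi : i = 0
    · subst hi; rw [h0]; simp
    · have := hx i; rw [if_neg hi] at this; simpa using this
  have hBoxcard : Box.card = (s + 1) ^ n := by
    rw [Fintype.card_piFinset, Fin.prod_univ_succ]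
    simp [Fin.succ_ne_zero]
  have hinj : Set.InjOn φ Box := by
    intro x hx y hy hxy
    have hx := hBox x hx
    have hy := hBox y hy
    have h1 : φ (x - y) = 0 := by rw [hφsub, hxy, sub_self]
    rw [ZMod.intCast_zmod_eq_zero_iff_dvd] at h1
    obtain ⟨m, hm⟩ := h1
    have hz0 : (x - y) 0 = 0 := by simp [hx.1, hy.1]
    have hzs : ∀ i, |(x - y) i| ≤ s := by
      intro i
      have h2 := hx.2 i; have h3 := hy.2 i
      rw [Pi.sub_apply, abs_le]; constructor <;> omega
    have hb := dot_bound a (x - y) A s ha hz0 hzs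
    have hm16 : |m| ≤ 16 * n * s := by
      rw [hm, abs_mul, Nat.abs_cast] at hb
      have h4 : (q:ℤ) * |m| ≤ q * (16 * n * s) := by
        calc (q:ℤ) * |m| ≤ n * (A * s) := hb
          _ ≤ n * ((16 * q) * s) := by rw [hqq] at hq; gcongr
          _ = _ := by ring
      exact le_of_mul_le_mul_left h4 (by exact_mod_cast hq0)
    have hdot : a ⬝ᵥ (x - y - Pi.single 0 m) = 0 := by
      rw [dotProduct_sub, hm, dotProduct_single, hqq]; ring
    have hzero : x - y - Pi.single 0 m = 0 := by
      by_contra hne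
      refine hgood _ hne (fun i => ?_) hdot
      by_cases hi : i = 0
      · subst hi
        rw [Pi.sub_apply, hz0]; simpa using hm16
      · rw [Pi.sub_apply, Pi.single_eq_of_ne hi, sub_zero]
        refine (hzs i).trans ?_
        have : s ≤ 16 * n * s := Nat.le_mul_of_pos_left _ (by omega)
        exact_mod_cast this
    funext i
    by_cases hi : i = 0
    · subst hi; rw [hx.1, hy.1]
    · have := congrFun hzero i
      rw [Pi.sub_apply, Pi.single_eq_of_ne hi] at this
      simp at this; omega
  let U := Box.image φ
  have hUcard : U.card = (s + 1) ^ n := by rw [Finset.card_image_of_injOn hinj, hBoxcard]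
  have h0U : (0 : ZMod q) ∈ U := by
    refine Finset.mem_image.2 ⟨0, ?_, by simp [φ]⟩
    rw [Fintype.mem_piFinset]; intro i; split_ifs <;> simp
  have haU : ∀ i, (a i : ZMod q) ∈ U := by
    intro i
    by_cases hi : i = 0
    · subst hi; rw [hqq]; simpa using h0U
    · refine Finset.mem_image.2 ⟨Pi.single i 1, ?_, by simp [φ]⟩
      rw [Fintype.mem_piFinset]; intro j
      by_cases hj : j = 0
      · subst hj; simp [Pi.single_eq_of_ne (Ne.symm hi)]
      · rw [if_neg hj]
        by_cases hji : j = i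
        · subst hji; simp; omega
        · simp [Pi.single_eq_of_ne hji]
  have hgen : AddSubgroup.closure ((U - U : Finset (ZMod q)) : Set (ZMod q)) = ⊤ := by
    rw [eq_top_iff]
    intro g _
    obtain ⟨c, hc⟩ := hprim
    have hg : g = ∑ i, ((g.val * c i : ℤ)) • (a i : ZMod q) := by
      have h1 : ((∑ i, c i * a i : ℤ) : ZMod q) = 1 := by
        have : ∑ i, c i * a i = 1 := hc
        rw [this]; simp
      push_cast at h1
      simp only [zsmul_eq_mul]
      push_cast
      simp only [mul_assoc, ← Finset.mul_sum, h1]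
      simp
    rw [hg]
    refine AddSubgroup.sum_mem _ fun i _ => AddSubgroup.zsmul_mem _ (AddSubgroup.subset_closure ?_) _
    exact Finset.mem_coe.2 (Finset.mem_sub.2 ⟨_, haU i, 0, h0U, sub_zero _⟩)
  have hcov := sumset_cover U ⟨0, h0U⟩ hgen K (by rw [ZMod.card, hUcard]; omega)
  have hlift : ∀ k : ℕ, ∀ g ∈ k • (U - U), ∃ z : Fin (n+1) → ℤ, z 0 = 0 ∧
      (∀ i, |z i| ≤ k * s) ∧ φ z = g := by
    intro k
    induction k with
    | zero =>
      intro g hg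
      refine ⟨0, rfl, by simp, ?_⟩
      have : g = 0 := by simpa using hg
      simp [φ, this]
    | succ k ih =>
      intro g hg
      rw [succ_nsmul] at hg
      obtain ⟨g1, hg1, g2, hg2, rfl⟩ := Finset.mem_add.1 hg
      obtain ⟨z, hz0, hzb, rfl⟩ := ih g1 hg1
      obtain ⟨u, hu, v, hv, rfl⟩ := Finset.mem_sub.1 hg2
      obtain ⟨x, hx, rfl⟩ := Finset.mem_image.1 hu
      obtain ⟨y, hy, rfl⟩ := Finset.mem_image.1 hv
      have hx := hBox x hx
      have hy := hBox y hy
      refine ⟨z + (x - y), by simp [hz0, hx.1, hy.1], fun i => ?_, by rw [hφadd, hφsub]⟩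
      have h1 := hzb i
      have h2 := hx.2 i; have h3 := hy.2 i
      rw [Pi.add_apply, Pi.sub_apply]
      rw [abs_le] at *
      push_cast
      constructor <;> linarith
  obtain ⟨z, hz0, hzb, hzk⟩ := hlift (2 * K) _ (hcov (k : ZMod q))
  have h1 : (((a ⬝ᵥ z - k : ℤ)) : ZMod q) = 0 := by
    push_cast
    have : ((a ⬝ᵥ z : ℤ) : ZMod q) = k := hzk
    rw [this, sub_self]
  rw [ZMod.intCast_zmod_eq_zero_iff_dvd] at h1
  obtain ⟨m, hm⟩ := h1
  have hb := dot_bound a z A _ ha hz0 hzb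
  have hs' : (1:ℤ) ≤ s := by exact_mod_cast hs
  have hn' : (1:ℤ) ≤ n := by exact_mod_cast hn
  have hK0 : (0:ℤ) ≤ K := by positivity
  refine ⟨z - Pi.single 0 m, ?_, fun i => ?_⟩
  · rw [dotProduct_sub, dotProduct_single, hqq]; linarith
  · by_cases hi : i = 0
    · subst hi
      rw [Pi.sub_apply, hz0, Pi.single_eq_same, zero_sub, abs_neg]
      have h4 : (q:ℤ) * |m| ≤ q * (16 * (n + 1 + 2 * n * K) * s) := by
        have e : (q:ℤ) * |m| = |a ⬝ᵥ z - k| := by rw [hm, abs_mul, Nat.abs_cast]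
        rw [e]
        calc |a ⬝ᵥ z - k| ≤ |a ⬝ᵥ z| + |k| := abs_sub _ _
          _ ≤ n * (A * ((2 * K : ℕ) * s)) + (n + 1) * A := add_le_add hb hk
          _ = A * ((n + 1) * 1 + 2 * n * K * s) := by push_cast; ring
          _ ≤ (16 * q) * ((n + 1) * s + 2 * n * K * s) := by rw [hqq] at hq; gcongr
          _ = _ := by ring
      exact le_of_mul_le_mul_left h4 (by exact_mod_cast hq0)
    · rw [Pi.sub_apply, Pi.single_eq_of_ne hi, sub_zero]
      refine (hzb i).trans ?_
      push_cast
      have h5 : (2 * K : ℤ) ≤ 16 * (n + 1 + 2 * n * K) := by nlinarith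
      gcongr


lemma prim_part {d : ℕ} (x : Fin d → ℤ) (hx : x ≠ 0) :
    ∃ (g : ℤ) (y c : Fin d → ℤ), 0 < g ∧ (∀ i, x i = g * y i) ∧ c ⬝ᵥ y = 1 := by
  obtain ⟨g, hg⟩ := (IsPrincipalIdealRing.principal (Ideal.span (Set.range x))).principal
  have hmem : ∀ i, g ∣ x i := by
    intro i
    have : x i ∈ Ideal.span (Set.range x) := Ideal.subset_span ⟨i, rfl⟩
    rw [hg] at this
    exact Ideal.mem_span_singleton.1 this
  have hgm : g ∈ Ideal.span (Set.range x) := by rw [hg]; exact Submodule.mem_span_singleton_self g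
  obtain ⟨c, hc⟩ := (Submodule.mem_span_range_iff_exists_fun ℤ).1 hgm
  choose y hy using hmem
  have hg0 : g ≠ 0 := by
    rintro rfl
    apply hx; funext i; rw [hy i]; simp
  have h1 : c ⬝ᵥ y = 1 := by
    apply mul_left_cancel₀ hg0
    rw [mul_one, dotProduct, Finset.mul_sum]
    conv_rhs => rw [← hc]
    refine Finset.sum_congr rfl fun i _ => ?_
    rw [hy i, smul_eq_mul]; ring
  rcases lt_or_gt_of_ne hg0 with h | h
  · refine ⟨-g, -y, -c, by omega, fun i => by rw [hy i]; simp, by simpa using h1⟩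
  · exact ⟨g, y, c, h, hy, h1⟩

noncomputable def abox (n A : ℕ) : Finset (Fin (n+1) → ℤ) := Fintype.piFinset (fun _ => Finset.Icc 1 (A:ℤ))

lemma mem_abox {n A : ℕ} {a : Fin (n+1) → ℤ} : a ∈ abox n A ↔ ∀ i, 1 ≤ a i ∧ a i ≤ A := by
  simp [abox]

lemma card_abox (n A : ℕ) : (abox n A).card = A ^ (n+1) := by
  simp [abox, Fintype.card_piFinset]

lemma count_perp {n : ℕ} (A M : ℕ) (hM : 0 < M) (hMA : M ≤ A) (x c : Fin (n+1) → ℤ)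
    (hc : c ⬝ᵥ x = 1) (j : Fin (n+1)) (hj : |x j| = M) :
    ((abox n A).filter (fun a => a ⬝ᵥ x = 0)).card * M ≤ (2 * A) ^ n := by
  have hM' : (0:ℤ) < M := by exact_mod_cast hM
  let F : (Fin (n+1) → ℤ) × ℕ → (Fin (n+1) → ℤ) :=
    fun pt i => if i = j then 0 else pt.1 i + (pt.2 * c i) % M
  have hxj : (M:ℤ) ∣ x j := by rw [← hj]; exact abs_dvd_self _
  have hmod : ∀ a : Fin (n+1) → ℤ, ∀ t : ℕ, a ⬝ᵥ x = 0 → (M:ℤ) ∣ F (a, t) ⬝ᵥ x - t := by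
    intro a t ha
    have e : F (a, t) ⬝ᵥ x - t = ∑ i, (F (a, t) i - a i - t * c i) * x i := by
      have : ∑ i, (F (a, t) i - a i - t * c i) * x i = F (a, t) ⬝ᵥ x - a ⬝ᵥ x - t * (c ⬝ᵥ x) := by
        simp only [dotProduct, sub_mul, Finset.sum_sub_distrib, Finset.mul_sum, mul_assoc]
      rw [this, ha, hc]; ring
    rw [e]
    refine Finset.dvd_sum fun i _ => ?_
    by_cases hi : i = j
    · subst hi; exact Dvd.dvd.mul_left hxj _
    · refine Dvd.dvd.mul_right ?_ _
      simp only [F, if_neg hi]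
      have : a i + (t * c i) % M - a i - t * c i = -(t * c i - (t * c i) % M) := by ring
      rw [this, dvd_neg]
      exact Int.dvd_self_sub_emod
  have hcard : (((abox n A).filter (fun a => a ⬝ᵥ x = 0)) ×ˢ Finset.range M).card ≤
      (Fintype.piFinset (fun i : Fin (n+1) => if i = j then {0} else Finset.Icc 1 ((2*A:ℕ):ℤ))).card := by
    refine Finset.card_le_card_of_injOn F ?_ ?_
    · rintro ⟨a, t⟩ h
      have h := (Finset.mem_product.1 h).1
      have ha := mem_abox.1 (Finset.mem_filter.1 h).1
      refine Finset.mem_coe.2 (Fintype.mem_piFinset.2 fun i => ?_)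
      by_cases hi : i = j
      · simp [F, hi]
      · simp only [F, if_neg hi, Finset.mem_Icc]
        have h1 : 1 ≤ a i ∧ a i ≤ A := ha i
        have h2 := Int.emod_nonneg (t * c i) hM'.ne'
        have h3 := Int.emod_lt_of_pos (t * c i) hM'
        push_cast
        constructor <;> omega
    · rintro ⟨a, t⟩ h ⟨a', t'⟩ h' heq
      have h := Finset.mem_product.1 h
      have h' := Finset.mem_product.1 h'
      have ha := (Finset.mem_filter.1 h.1).2
      have ha' := (Finset.mem_filter.1 h'.1).2
      have ht := Finset.mem_range.1 h.2
      have ht' := Finset.mem_range.1 h'.2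
      simp only at ha ha' ht ht'
      have htt : t = t' := by
        have d1 := hmod a t ha
        have d2 := hmod a' t' ha'
        rw [heq] at d1
        have d3 := dvd_sub d1 d2
        have e : F (a', t') ⬝ᵥ x - (t:ℤ) - (F (a', t') ⬝ᵥ x - (t':ℤ)) = t' - t := by ring
        rw [e] at d3
        have : (t':ℤ) - t = 0 := Int.eq_zero_of_abs_lt_dvd d3 (by rw [abs_lt]; constructor <;> omega)
        omega
      subst htt
      have hne : ∀ i, i ≠ j → a i = a' i := by
        intro i hi
        have := congrFun heq i
        simp only [F, if_neg hi] at this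
        omega
      have hjj : a j = a' j := by
        have e : (a - a') ⬝ᵥ x = (a j - a' j) * x j := by
          rw [dotProduct, Finset.sum_eq_single j]
          · simp
          · intro i _ hi; simp [hne i hi]
          · simp
        rw [sub_dotProduct, ha, ha', sub_zero] at e
        have hxj0 : x j ≠ 0 := by
          intro h0; rw [h0] at hj; simp at hj; omega
        have := (mul_eq_zero.1 e.symm).resolve_right hxj0
        omega
      have : a = a' := by
        funext i
        by_cases hi : i = j
        · rw [hi]; exact hjj
        · exact hne i hi
      rw [this]
  rw [Finset.card_product, Finset.card_range] at hcard
  refine hcard.trans (le_of_eq ?_)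
  rw [Fintype.card_piFinset, ← Finset.mul_prod_erase _ _ (Finset.mem_univ j)]
  simp only [if_true, Finset.card_singleton, one_mul]
  rw [Finset.prod_congr rfl (g := fun _ => 2 * A)]
  · simp
  · intro i hi
    rw [if_neg (Finset.ne_of_mem_erase hi), Int.card_Icc]; omega

lemma count_bad {n : ℕ} (hn : 1 ≤ n) (A X : ℕ) (hXA : X ≤ A) (B : Finset (Fin (n+1) → ℤ))
    (hB : ∀ a ∈ B, a ∈ abox n A ∧ ∃ x : Fin (n+1) → ℤ, x ≠ 0 ∧ (∀ i, |x i| ≤ X) ∧ a ⬝ᵥ x = 0) :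
    B.card ≤ (n + 1) * (X * (2 * 3 ^ n * X ^ (n-1) * (2 * A) ^ n)) := by
  classical
  let Y : Fin (n+1) → ℕ → Finset (Fin (n+1) → ℤ) := fun j M =>
    (Fintype.piFinset (fun i => if i = j then {(M:ℤ), -(M:ℤ)} else Finset.Icc (-(M:ℤ)) M)).filter
      (fun y => ∃ c, c ⬝ᵥ y = 1)
  let P : (Fin (n+1) → ℤ) → Finset (Fin (n+1) → ℤ) := fun y => (abox n A).filter (fun a => a ⬝ᵥ y = 0)
  have hsub : B ⊆ Finset.univ.biUnion (fun j => (Finset.Icc 1 X).biUnion (fun M => (Y j M).biUnion P)) := by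
    intro a ha
    obtain ⟨hab, x, hx0, hxX, hax⟩ := hB a ha
    obtain ⟨g, y, c, hg, hxy, hcy⟩ := prim_part x hx0
    obtain ⟨j, -, hj⟩ := Finset.exists_max_image Finset.univ (fun i => |y i|) ⟨0, Finset.mem_univ _⟩
    have hy0 : y j ≠ 0 := by
      intro h
      have : y = 0 := by
        funext i
        have := hj i (Finset.mem_univ i)
        simp only [h, abs_zero] at this
        exact abs_nonpos_iff.1 this
      rw [this] at hcy; simp at hcy
    have hMX : |y j| ≤ X := by
      have := hxX j
      rw [hxy j, abs_mul, abs_of_pos hg] at this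
      have h0 := abs_nonneg (y j)
      nlinarith
    have hnat : ((y j).natAbs : ℤ) = |y j| := Int.natCast_natAbs _
    simp only [Finset.mem_biUnion, Finset.mem_univ, true_and, Finset.mem_Icc]
    refine ⟨j, (y j).natAbs, ⟨Int.natAbs_pos.2 hy0, by omega⟩, y, ?_, ?_⟩
    · refine Finset.mem_filter.2 ⟨Fintype.mem_piFinset.2 fun i => ?_, c, hcy⟩
      by_cases hi : i = j
      · subst hi
        rw [if_pos rfl, Finset.mem_insert, Finset.mem_singleton]
        omega
      · rw [if_neg hi, Finset.mem_Icc, hnat]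
        exact abs_le.1 (hj i (Finset.mem_univ i))
    · refine Finset.mem_filter.2 ⟨hab, ?_⟩
      have e : a ⬝ᵥ x = g * (a ⬝ᵥ y) := by
        simp only [dotProduct, Finset.mul_sum]
        exact Finset.sum_congr rfl fun i _ => by rw [hxy i]; ring
      rw [hax] at e
      exact (mul_eq_zero.1 e.symm).resolve_left hg.ne'
  refine (Finset.card_le_card hsub).trans ?_
  refine Finset.card_biUnion_le.trans ?_
  have hone : ∀ j, ∀ M ∈ Finset.Icc 1 X, ((Y j M).biUnion P).card ≤ 2 * 3 ^ n * X ^ (n-1) * (2 * A) ^ n := by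
    intro j M hM
    rw [Finset.mem_Icc] at hM
    have hYcard : (Y j M).card ≤ 2 * (3 * M) ^ n := by
      refine (Finset.card_filter_le _ _).trans ?_
      rw [Fintype.card_piFinset, ← Finset.mul_prod_erase _ _ (Finset.mem_univ j)]
      rw [if_pos rfl]
      gcongr
      · exact Finset.card_le_two
      · refine (Finset.prod_le_pow_card _ _ (3 * M) ?_).trans (le_of_eq (by simp))
        intro i hi
        rw [if_neg (Finset.ne_of_mem_erase hi), Int.card_Icc]; omega
    have h1 : ((Y j M).biUnion P).card * M ≤ (Y j M).card * (2 * A) ^ n := by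
      refine (Nat.mul_le_mul_right _ Finset.card_biUnion_le).trans ?_
      rw [Finset.sum_mul, ← smul_eq_mul, ← Finset.sum_const]
      refine Finset.sum_le_sum fun y hy => ?_
      have hy := Finset.mem_filter.1 hy
      obtain ⟨c, hc⟩ := hy.2
      refine count_perp A M (by omega) (by omega) y c hc j ?_
      have := Fintype.mem_piFinset.1 hy.1 j
      rw [if_pos rfl, Finset.mem_insert, Finset.mem_singleton] at this
      rcases this with h | h <;> rw [h] <;> simp
    have h2 : ((Y j M).biUnion P).card * M ≤ (2 * 3 ^ n * M ^ (n-1) * (2 * A) ^ n) * M := by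
      refine h1.trans ?_
      calc (Y j M).card * (2 * A) ^ n ≤ (2 * (3 * M) ^ n) * (2 * A) ^ n := by gcongr
        _ = _ := by
          obtain ⟨m, rfl⟩ : ∃ m, n = m + 1 := ⟨n - 1, by omega⟩
          rw [mul_pow 3 M, Nat.add_sub_cancel, pow_succ M]; ring
    have h3 := Nat.le_of_mul_le_mul_right h2 (by omega : 0 < M)
    refine h3.trans ?_
    gcongr
    exact hM.2
  calc ∑ j : Fin (n+1), ((Finset.Icc 1 X).biUnion (fun M => (Y j M).biUnion P)).card
      ≤ ∑ j : Fin (n+1), X * (2 * 3 ^ n * X ^ (n-1) * (2 * A) ^ n) := by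
        refine Finset.sum_le_sum fun j _ => ?_
        refine Finset.card_biUnion_le.trans ?_
        refine (Finset.sum_le_card_nsmul _ _ _ (hone j)).trans (le_of_eq ?_)
        simp
    _ = _ := by simp

lemma sum_inv_sq (A : ℕ) : ∑ k ∈ Finset.Icc 2 A, (1 : ℝ) / (k:ℝ) ^ 2 ≤ 3 / 4 := by
  have key : ∀ m : ℕ, ∑ k ∈ Finset.Icc 2 (m + 2), (1 : ℝ) / (k:ℝ) ^ 2 ≤ 3 / 4 - 1 / (m + 2) := by
    intro m
    induction m with
    | zero => norm_num
    | succ m ih =>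
      rw [show m + 1 + 2 = (m + 2) + 1 by ring, Finset.sum_Icc_succ_top (by omega)]
      have : (1 : ℝ) / ((m + 2 + 1 : ℕ):ℝ) ^ 2 ≤ 1 / (m + 2) - 1 / (m + 3) := by
        push_cast
        rw [div_sub_div _ _ (by positivity) (by positivity), div_le_div_iff₀ (by positivity) (by positivity)]
        have : (0:ℝ) ≤ m := by positivity
        nlinarith
      push_cast at *
      have e : (1:ℝ) / (m + 1 + 2) = 1 / (m + 3) := by congr 1; ring
      rw [e]
      linarith
  by_cases h : 2 ≤ A
  · obtain ⟨m, rfl⟩ : ∃ m, A = m + 2 := ⟨A - 2, by omega⟩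
    refine (key m).trans ?_
    have : (0:ℝ) ≤ 1 / (m + 2) := by positivity
    linarith
  · rw [Finset.Icc_eq_empty (by omega)]; norm_num

lemma count_nonprim {n : ℕ} (hn : 1 ≤ n) (A : ℕ) (B : Finset (Fin (n+1) → ℤ))
    (hB : ∀ a ∈ B, a ∈ abox n A ∧ ¬ ∃ c, c ⬝ᵥ a = 1) :
    4 * B.card ≤ 3 * A ^ (n+1) := by
  classical
  let P : ℕ → Finset (Fin (n+1) → ℤ) := fun k => (abox n A).filter (fun a => ∀ i, (k:ℤ) ∣ a i)
  have hsub : B ⊆ (Finset.Icc 2 A).biUnion P := by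
    intro a ha
    obtain ⟨hab, hnp⟩ := hB a ha
    have hab' := mem_abox.1 hab
    have ha0 : a ≠ 0 := by
      intro h; have := (hab' 0).1; rw [h] at this; simp at this
    obtain ⟨g, y, c, hg, hgy, hc⟩ := prim_part a ha0
    obtain ⟨k, rfl⟩ : ∃ k : ℕ, g = k := ⟨g.toNat, by omega⟩
    have hk1 : k ≠ 1 := by
      rintro rfl
      apply hnp
      refine ⟨c, ?_⟩
      have : a = y := by funext i; rw [hgy i]; simp
      rw [this]; exact hc
    have hkA : k ≤ A := by
      have h1 := hab' 0
      have h2 : (k:ℤ) ∣ a 0 := ⟨y 0, hgy 0⟩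
      have := Int.le_of_dvd (by omega) h2
      omega
    refine Finset.mem_biUnion.2 ⟨k, Finset.mem_Icc.2 ⟨by omega, hkA⟩, Finset.mem_filter.2 ⟨hab, fun i => ⟨y i, hgy i⟩⟩⟩
  have hP : ∀ k ∈ Finset.Icc 2 A, ((P k).card : ℝ) ≤ (A:ℝ) ^ (n+1) * (1 / (k:ℝ) ^ 2) := by
    intro k hk
    rw [Finset.mem_Icc] at hk
    have hk0 : (0:ℤ) < k := by omega
    have hc : (P k).card ≤ (A / k) ^ (n+1) := by
      rw [← card_abox]
      refine Finset.card_le_card_of_injOn (fun a i => a i / k) ?_ ?_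
      · intro a ha
        obtain ⟨ha1, ha2⟩ := Finset.mem_filter.1 ha
        refine Finset.mem_coe.2 (mem_abox.2 fun i => ?_)
        have h1 := mem_abox.1 ha1 i
        obtain ⟨m, hm⟩ := ha2 i
        constructor
        · rw [Int.le_ediv_iff_mul_le hk0]
          have := Int.le_of_dvd (by omega) (ha2 i); linarith
        · push_cast
          exact Int.ediv_le_ediv hk0 h1.2
      · intro a ha b hb h
        have ha2 := (Finset.mem_filter.1 ha).2
        have hb2 := (Finset.mem_filter.1 hb).2
        funext i
        have := congrFun h i
        simp only at this
        rw [← Int.ediv_mul_cancel (ha2 i), this, Int.ediv_mul_cancel (hb2 i)]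
    have hkr : (1:ℝ) ≤ k := by exact_mod_cast (by omega : 1 ≤ k)
    calc ((P k).card : ℝ) ≤ ((A / k : ℕ) : ℝ) ^ (n+1) := by exact_mod_cast hc
      _ ≤ ((A:ℝ) / k) ^ (n+1) := by gcongr; exact Nat.cast_div_le
      _ = (A:ℝ) ^ (n+1) * (1 / (k:ℝ) ^ (n+1)) := by rw [div_pow]; ring
      _ ≤ _ := by
        have h2 : (k:ℝ) ^ 2 ≤ (k:ℝ) ^ (n+1) := pow_le_pow_right₀ hkr (by omega)
        have h3 : (0:ℝ) < (k:ℝ) ^ 2 := by positivity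
        exact mul_le_mul_of_nonneg_left (one_div_le_one_div_of_le h3 h2) (by positivity)
  have h1 : (B.card : ℝ) ≤ (A:ℝ) ^ (n+1) * (3 / 4) := by
    calc (B.card : ℝ) ≤ ∑ k ∈ Finset.Icc 2 A, ((P k).card : ℝ) := by
          exact_mod_cast (Finset.card_le_card hsub).trans Finset.card_biUnion_le
      _ ≤ ∑ k ∈ Finset.Icc 2 A, (A:ℝ) ^ (n+1) * (1 / (k:ℝ) ^ 2) := Finset.sum_le_sum hP
      _ = (A:ℝ) ^ (n+1) * ∑ k ∈ Finset.Icc 2 A, (1 / (k:ℝ) ^ 2) := by rw [Finset.mul_sum]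
      _ ≤ _ := by gcongr; exact sum_inv_sq A
  have : (4 * B.card : ℝ) ≤ 3 * (A:ℝ) ^ (n+1) := by linarith
  exact_mod_cast this

lemma count_low {n : ℕ} (A : ℕ) (B : Finset (Fin (n+1) → ℤ))
    (hB : ∀ a ∈ B, a ∈ abox n A ∧ 16 * a 0 < A) : 16 * B.card ≤ A ^ (n+1) := by
  have h : B.card ≤ (Fintype.piFinset (fun i : Fin (n+1) => if i = 0 then Finset.Icc 1 ((A/16:ℕ):ℤ) else Finset.Icc 1 (A:ℤ))).card := by
    refine Finset.card_le_card fun a ha => Fintype.mem_piFinset.2 fun i => ?_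
    obtain ⟨h1, h2⟩ := hB a ha
    have h1 := mem_abox.1 h1 i
    by_cases hi : i = 0
    · subst hi; rw [if_pos rfl, Finset.mem_Icc]; omega
    · rw [if_neg hi, Finset.mem_Icc]; exact h1
  rw [Fintype.card_piFinset, Fin.prod_univ_succ] at h
  simp [Fin.succ_ne_zero] at h
  have e : ((A:ℤ)/16).toNat = A/16 := by omega
  rw [e] at h
  calc 16 * B.card ≤ 16 * (A / 16 * A ^ n) := by omega
    _ = (16 * (A / 16)) * A ^ n := by ring
    _ ≤ A * A ^ n := by gcongr; omega
    _ = _ := by ring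

def IsGood (n A X : ℕ) (a : Fin (n+1) → ℤ) : Prop :=
  (∀ i, 1 ≤ a i ∧ a i ≤ A) ∧ (A : ℤ) ≤ 16 * a 0 ∧ (∃ c, c ⬝ᵥ a = 1) ∧
    ∀ x : Fin (n+1) → ℤ, x ≠ 0 → (∀ i, |x i| ≤ X) → a ⬝ᵥ x ≠ 0

lemma count_good {n : ℕ} (hn : 1 ≤ n) (A X : ℕ)
    (hX : 16 * ((n + 1) * (2 * 6 ^ n)) * X ^ n ≤ A) (hX1 : 1 ≤ X) :
    ∃ T : Finset (Fin (n+1) → ℤ), (∀ a ∈ T, IsGood n A X a) ∧ A ^ (n+1) ≤ 8 * T.card := by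
  classical
  have hXA : X ≤ A := by
    calc X = X ^ 1 := (pow_one X).symm
      _ ≤ X ^ n := Nat.pow_le_pow_right hX1 hn
      _ ≤ 16 * ((n + 1) * (2 * 6 ^ n)) * X ^ n := Nat.le_mul_of_pos_left _ (by positivity)
      _ ≤ A := hX
  let T := (abox n A).filter (IsGood n A X)
  let N := (abox n A).filter (fun a => ¬ ∃ c, c ⬝ᵥ a = 1)
  let L := (abox n A).filter (fun a => 16 * a 0 < (A:ℤ))
  let B := (abox n A).filter (fun a => ∃ x : Fin (n+1) → ℤ, x ≠ 0 ∧ (∀ i, |x i| ≤ X) ∧ a ⬝ᵥ x = 0)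
  refine ⟨T, fun a ha => (Finset.mem_filter.1 ha).2, ?_⟩
  have h1 := count_nonprim hn A N (fun a ha => Finset.mem_filter.1 ha)
  have h2 := count_low A L (fun a ha => Finset.mem_filter.1 ha)
  have h3 := count_bad hn A X hXA B (fun a ha => Finset.mem_filter.1 ha)
  have h4 : 16 * B.card ≤ A ^ (n+1) := by
    calc 16 * B.card ≤ 16 * ((n + 1) * (X * (2 * 3 ^ n * X ^ (n-1) * (2 * A) ^ n))) := by omega
      _ = (16 * ((n + 1) * (2 * 6 ^ n)) * X ^ n) * A ^ n := by
        obtain ⟨m, rfl⟩ : ∃ m, n = m + 1 := ⟨n - 1, by omega⟩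
        rw [mul_pow 2 A, Nat.add_sub_cancel, pow_succ X, show (6:ℕ) = 3 * 2 by norm_num, mul_pow 3 2]; ring
      _ ≤ A * A ^ n := by gcongr
      _ = _ := by ring
  have hsub : abox n A ⊆ T ∪ (N ∪ (L ∪ B)) := by
    intro a ha
    by_contra hcon
    simp only [Finset.mem_union, T, N, L, B, Finset.mem_filter, not_or, not_and, ha, true_and,
      forall_const, true_implies] at hcon
    obtain ⟨c1, c2, c3, c4⟩ := hcon
    apply c1
    refine ⟨mem_abox.1 ha, by omega, not_not.1 c2, fun x hx hxX h => c4 ⟨x, hx, hxX, h⟩⟩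
  have h5 := Finset.card_le_card hsub
  have h6 := Finset.card_union_le T (N ∪ (L ∪ B))
  have h7 := Finset.card_union_le N (L ∪ B)
  have h8 := Finset.card_union_le L B
  rw [card_abox] at h5
  omega



lemma alpha_bounds {D : ℕ} (hD : 1 ≤ D) (A : ℕ) (a : Fin D → ℤ) (ha : ∀ i, 1 ≤ a i ∧ a i ≤ A) :
    1 ≤ √(∑ i, (a i : ℝ) ^ 2) ∧ √(∑ i, (a i : ℝ) ^ 2) ≤ D * A ∧
      ∀ i, (a i : ℝ) ≤ √(∑ i, (a i : ℝ) ^ 2) := by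
  have har : ∀ i, (1:ℝ) ≤ a i ∧ (a i : ℝ) ≤ A := fun i => by
    have := ha i
    exact ⟨by exact_mod_cast this.1, by exact_mod_cast this.2⟩
  have h3 : ∀ i, (a i : ℝ) ≤ √(∑ i, (a i : ℝ) ^ 2) := by
    intro i
    apply Real.le_sqrt_of_sq_le
    exact Finset.single_le_sum (f := fun i => (a i : ℝ) ^ 2) (fun i _ => sq_nonneg _) (Finset.mem_univ i)
  refine ⟨(har ⟨0, hD⟩).1.trans (h3 _), ?_, h3⟩
  apply Real.sqrt_le_iff.2
  refine ⟨by positivity, ?_⟩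
  have hDr : (1:ℝ) ≤ D := by exact_mod_cast hD
  calc ∑ i, (a i : ℝ) ^ 2 ≤ ∑ i : Fin D, (A:ℝ) ^ 2 := by
        refine Finset.sum_le_sum fun i _ => ?_
        have := har i
        gcongr
        · linarith
        · exact this.2
    _ = D * (A:ℝ) ^ 2 := by simp
    _ ≤ (D * A) ^ 2 := by rw [mul_pow]; gcongr; nlinarith

lemma exist_vertex {D : ℕ} (hD : 1 ≤ D) (r A L : ℕ) (a : Fin D → ℤ)
    (ha : ∀ i, 1 ≤ a i ∧ a i ≤ A)
    (hrep : ∀ k : ℤ, |k| ≤ D * A → ∃ w : Fin D → ℤ, a ⬝ᵥ w = k ∧ ∀ i, |w i| ≤ L)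
    (hr : D * A * (1 + D * (L + 1) ^ 2) ≤ 2 * r) :
    ∃ v ∈ Vd D r, (r:ℝ) * √(∑ i, (a i : ℝ) ^ 2) - 2 ≤ ∑ i, (a i : ℝ) * v i ∧
      ∑ i, (v i : ℝ) ^ 2 ≤ (r:ℝ) ^ 2 := by
  obtain ⟨h1, h2, h3⟩ := alpha_bounds hD A a ha
  set α := √(∑ i, (a i : ℝ) ^ 2) with hα
  have hα2 : ∑ i, (a i : ℝ) ^ 2 = α ^ 2 := by
    rw [hα, Real.sq_sqrt (Finset.sum_nonneg fun i _ => sq_nonneg _)]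
  have hα0 : 0 < α := by linarith
  have hrr : (D:ℝ) * A * (1 + D * ((L:ℝ) + 1) ^ 2) ≤ 2 * r := by exact_mod_cast hr
  have hr1 : (1:ℝ) ≤ r := by
    have : 1 ≤ r := by
      have hA : 1 ≤ A := by have := ha ⟨0, hD⟩; omega
      have : 1 ≤ D * A := Nat.mul_pos hD hA
      have h' : 1 ≤ D * (L+1)^2 := Nat.mul_pos hD (by positivity)
      have : 1 * (1 + 1) ≤ D * A * (1 + D * (L + 1) ^ 2) := Nat.mul_le_mul this (by omega)
      omega
    exact_mod_cast this
  set k : ℤ := ⌊(r:ℝ) * α⌋ - 1 with hk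
  have hk1 : (k:ℝ) ≤ r * α - 1 := by
    rw [hk]; push_cast; have := Int.floor_le ((r:ℝ) * α); linarith
  have hk2 : (r:ℝ) * α - 2 ≤ k := by
    rw [hk]; push_cast; have := Int.lt_floor_add_one ((r:ℝ) * α); linarith
  have hk0 : (0:ℝ) ≤ k := by
    have : (1:ℤ) ≤ ⌊(r:ℝ) * α⌋ := by
      rw [Int.le_floor]; push_cast; nlinarith
    have : (0:ℤ) ≤ k := by omega
    exact_mod_cast this
  let y : Fin D → ℝ := fun i => k / α ^ 2 * a i
  let z : Fin D → ℤ := fun i => ⌊y i⌋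
  have hay : ∑ i, (a i : ℝ) * y i = k := by
    have : ∑ i, (a i : ℝ) * y i = k / α ^ 2 * ∑ i, (a i : ℝ) ^ 2 := by
      rw [Finset.mul_sum]; exact Finset.sum_congr rfl fun i _ => by simp only [y]; ring
    rw [this, hα2]; field_simp
  have hyz : ∀ i, 0 ≤ y i - z i ∧ y i - z i ≤ 1 := fun i =>
    ⟨by have := Int.floor_le (y i); simp only [z]; linarith,
     by have := Int.lt_floor_add_one (y i); simp only [z]; linarith⟩
  have hkz : |k - a ⬝ᵥ z| ≤ D * A := by
    have e : ((k - a ⬝ᵥ z : ℤ) : ℝ) = ∑ i, (a i : ℝ) * (y i - z i) := by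
      simp only [mul_sub, Finset.sum_sub_distrib, hay, dotProduct]; push_cast; rfl
    have l0 : (0:ℝ) ≤ ((k - a ⬝ᵥ z : ℤ) : ℝ) := by
      rw [e]; exact Finset.sum_nonneg fun i _ => mul_nonneg
        (by have := (ha i).1; exact_mod_cast (by omega : 0 ≤ a i)) (hyz i).1
    have l1 : ((k - a ⬝ᵥ z : ℤ) : ℝ) ≤ D * A := by
      rw [e]
      calc ∑ i, (a i : ℝ) * (y i - z i) ≤ ∑ i : Fin D, (A:ℝ) * 1 := by
            refine Finset.sum_le_sum fun i _ => ?_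
            exact mul_le_mul (by exact_mod_cast (ha i).2) (hyz i).2 (hyz i).1 (by positivity)
        _ = D * A := by simp
    rw [abs_of_nonneg (by exact_mod_cast l0)]
    exact_mod_cast l1
  obtain ⟨w, hw, hwL⟩ := hrep _ hkz
  let x : Fin D → ℤ := z + w
  have hax : ∑ i, (a i : ℝ) * x i = k := by
    have : a ⬝ᵥ x = k := by simp only [x, dotProduct_add, hw]; ring
    rw [← this]; simp [dotProduct]
  have hxn : ∑ i, (x i : ℝ) ^ 2 ≤ (r:ℝ) ^ 2 := by
    have e : ∑ i, (x i : ℝ) ^ 2 = (k:ℝ) ^ 2 / α ^ 2 + ∑ i, ((x i : ℝ) - y i) ^ 2 := by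
      have e1 : ∑ i, ((x i : ℝ) - y i) ^ 2 = ∑ i, (x i : ℝ) ^ 2 - 2 * (k / α ^ 2) * ∑ i, (a i : ℝ) * x i
          + (k / α ^ 2) ^ 2 * ∑ i, (a i : ℝ) ^ 2 := by
        simp only [Finset.mul_sum, ← Finset.sum_sub_distrib, ← Finset.sum_add_distrib]
        exact Finset.sum_congr rfl fun i _ => by simp only [y]; ring
      rw [e1, hax, hα2]; field_simp; ring
    have e2 : ∑ i, ((x i : ℝ) - y i) ^ 2 ≤ D * ((L:ℝ) + 1) ^ 2 := by
      calc ∑ i, ((x i : ℝ) - y i) ^ 2 ≤ ∑ i : Fin D, ((L:ℝ) + 1) ^ 2 := by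
            refine Finset.sum_le_sum fun i _ => ?_
            have hw' : |(w i : ℝ)| ≤ L := by exact_mod_cast hwL i
            have := abs_le.1 hw'
            have hh := hyz i
            apply sq_le_sq'
            · simp only [x, Pi.add_apply]; push_cast; linarith
            · simp only [x, Pi.add_apply]; push_cast; linarith
        _ = _ := by simp
    rw [e]
    have e3 : (k:ℝ) ^ 2 / α ^ 2 ≤ (r * α - 1) ^ 2 / α ^ 2 := by gcongr
    have e4 : (r * α - 1) ^ 2 / α ^ 2 = (r:ℝ) ^ 2 - (2 * r * α - 1) / α ^ 2 := by field_simp; ring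
    have e5 : D * ((L:ℝ) + 1) ^ 2 ≤ (2 * r * α - 1) / α ^ 2 := by
      rw [le_div_iff₀ (by positivity)]
      have g0 : (0:ℝ) ≤ D * ((L:ℝ) + 1) ^ 2 := by positivity
      have g1 : α * (1 + D * ((L:ℝ) + 1) ^ 2) ≤ 2 * r :=
        (mul_le_mul_of_nonneg_right h2 (by positivity)).trans hrr
      have g2 := mul_le_mul_of_nonneg_left g1 hα0.le
      nlinarith
    linarith
  obtain ⟨e, he, hmax⟩ := exists_extreme_max (convexHull ℝ (latS D r))
    ((latS_finite D r).isCompact_convexHull (𝕜 := ℝ)) ⟨_, subset_convexHull ℝ _ ⟨x, hxn, rfl⟩⟩ (fun i => (a i : ℝ))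
  obtain ⟨v, hv, rfl⟩ := extremePoints_convexHull_subset he
  refine ⟨v, mem_Vd.2 he, ?_, hv⟩
  have := hmax _ (subset_convexHull ℝ _ ⟨x, hxn, rfl⟩)
  simp only [dotProduct] at this
  rw [hax] at this
  linarith

lemma near_dot {D : ℕ} (r α : ℝ) (hr : 0 < r) (a v x : Fin D → ℝ) (hα : 0 < α)
    (hα2 : ∑ i, (a i) ^ 2 = α ^ 2) (hav : r * α - 2 ≤ ∑ i, a i * v i)
    (hv : ∑ i, v i ^ 2 ≤ r ^ 2) :
    (∑ i, (a i - α / r * v i) * x i) ^ 2 ≤ 4 * α / r * ∑ i, x i ^ 2 := by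
  refine (Finset.sum_mul_sq_le_sq_mul_sq _ _ _).trans ?_
  gcongr
  have e : ∑ i, (a i - α / r * v i) ^ 2 = ∑ i, (a i) ^ 2 - 2 * (α / r) * ∑ i, a i * v i
      + (α / r) ^ 2 * ∑ i, v i ^ 2 := by
    simp only [Finset.mul_sum, ← Finset.sum_sub_distrib, ← Finset.sum_add_distrib]
    exact Finset.sum_congr rfl fun i _ => by ring
  have e1 : (α / r) * (r * α - 2) ≤ (α / r) * ∑ i, a i * v i := by gcongr
  have e2 : (α / r) ^ 2 * ∑ i, v i ^ 2 ≤ (α / r) ^ 2 * r ^ 2 := by gcongr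
  have e3 : (α / r) ^ 2 * r ^ 2 = α ^ 2 := by field_simp
  have e4 : (α / r) * (r * α - 2) = α ^ 2 - 2 * α / r := by field_simp
  have e5 : 4 * α / r = 2 * (2 * α / r) := by ring
  rw [e, hα2, e5]
  linarith

lemma inj_vertex {D : ℕ} (hD : 1 ≤ D) (r A L : ℕ) (hL : 1 ≤ L) (a b v : Fin D → ℤ)
    (ha : ∀ i, 1 ≤ a i ∧ a i ≤ A) (hb : ∀ i, 1 ≤ b i ∧ b i ≤ A)
    (haq : ∃ i, (A:ℤ) ≤ 16 * a i) (hprim : ∃ c, c ⬝ᵥ b = 1)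
    (hrep : ∀ k : ℤ, |k| ≤ D * A → ∃ w : Fin D → ℤ, a ⬝ᵥ w = k ∧ ∀ i, |w i| ≤ L)
    (hr : 72 * D * L ^ 2 * (A * (D + 256 * D ^ 3)) < r)
    (hav : (r:ℝ) * √(∑ i, (a i : ℝ) ^ 2) - 2 ≤ ∑ i, (a i : ℝ) * v i)
    (hbv : (r:ℝ) * √(∑ i, (b i : ℝ) ^ 2) - 2 ≤ ∑ i, (b i : ℝ) * v i)
    (hv : ∑ i, (v i : ℝ) ^ 2 ≤ (r:ℝ) ^ 2) : a = b := by
  have hDA : A ≤ D * A := Nat.le_mul_of_pos_left _ hD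
  have key : ∀ x : Fin D → ℤ, a ⬝ᵥ x = 0 → (∀ i, |x i| ≤ 3 * L) → b ⬝ᵥ x = 0 := by
    intro x hax hx
    obtain ⟨p1, p2, p3⟩ := alpha_bounds hD A a ha
    obtain ⟨q1, q2, q3⟩ := alpha_bounds hD A b hb
    have hr0 : (0:ℝ) < r := by exact_mod_cast (by omega : 0 < r)
    set α := √(∑ i, (a i : ℝ) ^ 2) with hα
    have hα2 : ∑ i, (a i : ℝ) ^ 2 = α ^ 2 := by
      rw [hα, Real.sq_sqrt (Finset.sum_nonneg fun i _ => sq_nonneg _)]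
    set β := √(∑ i, (b i : ℝ) ^ 2) with hβ
    have hβ2 : ∑ i, (b i : ℝ) ^ 2 = β ^ 2 := by
      rw [hβ, Real.sq_sqrt (Finset.sum_nonneg fun i _ => sq_nonneg _)]
    have hα0 : 0 < α := by linarith
    have hβ0 : 0 < β := by linarith
    have hQ := near_dot r α hr0 (fun i => (a i : ℝ)) (fun i => (v i : ℝ)) (fun i => (x i : ℝ)) hα0 hα2 hav hv
    have hP := near_dot r β hr0 (fun i => (b i : ℝ)) (fun i => (v i : ℝ)) (fun i => (x i : ℝ)) hβ0 hβ2 hbv hv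
    set Q := ∑ i, ((a i : ℝ) - α / r * v i) * x i with hQd
    set P := ∑ i, ((b i : ℝ) - β / r * v i) * x i with hPd
    have hS : ∑ i, (x i : ℝ) ^ 2 ≤ 9 * D * (L:ℝ) ^ 2 := by
      calc ∑ i, (x i : ℝ) ^ 2 ≤ ∑ i : Fin D, (3 * (L:ℝ)) ^ 2 := by
            refine Finset.sum_le_sum fun i _ => ?_
            have hx' : |(x i : ℝ)| ≤ 3 * L := by exact_mod_cast hx i
            exact sq_le_sq' (abs_le.1 hx').1 (abs_le.1 hx').2
        _ = _ := by simp; ring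
    set S := ∑ i, (x i : ℝ) ^ 2
    have hS0 : 0 ≤ S := Finset.sum_nonneg fun i _ => sq_nonneg _
    set μ := β / α with hμ
    have hμ0 : 0 < μ := by positivity
    have hμ1 : μ ≤ 16 * D := by
      obtain ⟨i, hi⟩ := haq
      have : (A:ℝ) ≤ 16 * a i := by exact_mod_cast hi
      rw [hμ, div_le_iff₀ hα0]
      have h5 : (A:ℝ) ≤ 16 * α := by linarith [p3 i]
      calc β ≤ D * A := q2
        _ ≤ D * (16 * α) := by gcongr
        _ = _ := by ring
    have haxr : ∑ i, (a i : ℝ) * x i = 0 := by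
      have : ((a ⬝ᵥ x : ℤ) : ℝ) = 0 := by rw [hax]; simp
      simpa [dotProduct] using this
    have hbx : ∑ i, (b i : ℝ) * x i = P - μ * Q := by
      have e1 : P = ∑ i, (b i : ℝ) * x i - β / r * ∑ i, (v i : ℝ) * x i := by
        rw [hPd, Finset.mul_sum, ← Finset.sum_sub_distrib]
        exact Finset.sum_congr rfl fun i _ => by ring
      have e2 : Q = ∑ i, (a i : ℝ) * x i - α / r * ∑ i, (v i : ℝ) * x i := by
        rw [hQd, Finset.mul_sum, ← Finset.sum_sub_distrib]
        exact Finset.sum_congr rfl fun i _ => by ring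
      rw [e1, e2, haxr, hμ]; field_simp; ring
    have hrr : 72 * (D:ℝ) * (L:ℝ) ^ 2 * (A * (D + 256 * (D:ℝ) ^ 3)) < r := by exact_mod_cast hr
    have hlt : (∑ i, (b i : ℝ) * x i) ^ 2 < 1 := by
      rw [hbx]
      have t1 : (P - μ * Q) ^ 2 ≤ 2 * P ^ 2 + 2 * μ ^ 2 * Q ^ 2 := by nlinarith [sq_nonneg (P + μ * Q)]
      have t2 : μ ^ 2 * Q ^ 2 ≤ μ ^ 2 * (4 * α / r * S) := by gcongr
      have t3 : 2 * P ^ 2 + 2 * μ ^ 2 * Q ^ 2 ≤ 8 * S * (β + μ ^ 2 * α) / r := by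
        have : 8 * S * (β + μ ^ 2 * α) / r = 2 * (4 * β / r * S) + 2 * (μ ^ 2 * (4 * α / r * S)) := by ring
        rw [this]; linarith
      refine (t1.trans t3).trans_lt ?_
      rw [div_lt_one hr0]
      refine lt_of_le_of_lt ?_ hrr
      calc 8 * S * (β + μ ^ 2 * α) ≤ 8 * (9 * D * (L:ℝ) ^ 2) * (D * A + (16 * D) ^ 2 * (D * A)) := by
            gcongr
        _ = _ := by ring
    have : ((b ⬝ᵥ x : ℤ) : ℝ) ^ 2 < 1 := by
      have e : ((b ⬝ᵥ x : ℤ) : ℝ) = ∑ i, (b i : ℝ) * x i := by simp [dotProduct]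
      rw [e]; exact hlt
    have h6 : (b ⬝ᵥ x) ^ 2 < 1 := by exact_mod_cast this
    have h7 : |b ⬝ᵥ x| < 1 := by
      rw [← abs_one, ← sq_lt_sq]; simpa using h6
    exact Int.abs_lt_one_iff.1 h7
  have hrep' : ∀ k : ℕ, ∃ w : Fin D → ℤ, k ≤ A → a ⬝ᵥ w = k ∧ ∀ i, |w i| ≤ L := by
    intro k
    by_cases hk : k ≤ A
    · obtain ⟨w, hw⟩ := hrep k (by
        rw [abs_of_nonneg (by positivity)]; exact_mod_cast hk.trans hDA)
      exact ⟨w, fun _ => hw⟩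
    · exact ⟨0, fun h => absurd h hk⟩
  choose w hw using hrep'
  have hA1 : 1 ≤ A := by have := ha ⟨0, hD⟩; omega
  have hind : ∀ k : ℕ, k ≤ A → b ⬝ᵥ w k = k * (b ⬝ᵥ w 1) := by
    intro k
    induction k with
    | zero =>
      intro hk
      obtain ⟨h1, h2⟩ := hw 0 hk
      rw [key (w 0) (by simpa using h1) (fun i => by have := h2 i; omega)]; simp
    | succ k ih =>
      intro hk
      obtain ⟨h1, h2⟩ := hw (k+1) hk
      obtain ⟨h3, h4⟩ := hw k (by omega)
      obtain ⟨h5, h6⟩ := hw 1 hA1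
      have := key (w (k+1) - w k - w 1) (by
        rw [dotProduct_sub, dotProduct_sub, h1, h3, h5]; push_cast; ring) (fun i => by
          have := h2 i; have := h4 i; have := h6 i
          simp only [Pi.sub_apply]
          rw [abs_le] at *
          omega)
      rw [dotProduct_sub, dotProduct_sub, ih (by omega)] at this
      push_cast
      linarith
  have hbi : ∀ i, b i = a i * (b ⬝ᵥ w 1) := by
    intro i
    obtain ⟨k, hk⟩ : ∃ k : ℕ, a i = k := ⟨(a i).toNat, by have := (ha i).1; omega⟩
    have hkA : k ≤ A := by have := (ha i).2; omega
    obtain ⟨h1, h2⟩ := hw k hkA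
    have := key (Pi.single i 1 - w k) (by
        rw [dotProduct_sub, h1, dotProduct_single, hk]; ring) (fun j => by
          have := h2 j
          have hs : (Pi.single i (1:ℤ) : Fin D → ℤ) j = 0 ∨ (Pi.single i (1:ℤ) : Fin D → ℤ) j = 1 := by
            by_cases hij : j = i
            · right; rw [hij]; simp
            · left; simp [hij]
          simp only [Pi.sub_apply]
          rw [abs_le] at *
          omega)
    rw [dotProduct_sub, dotProduct_single, hind k hkA] at this
    rw [hk]; linarith
  obtain ⟨c, hc⟩ := hprim
  have hdvd : (b ⬝ᵥ w 1) ∣ 1 := by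
    rw [← hc, dotProduct]
    refine Finset.dvd_sum fun i _ => ?_
    refine Dvd.dvd.mul_left ?_ _
    conv_rhs => rw [hbi i]
    exact Dvd.intro_left _ rfl
  have hpos : 0 < b ⬝ᵥ w 1 := by
    have h1 := hbi ⟨0, hD⟩
    have h2 := (hb ⟨0, hD⟩).1
    have h3 := (ha ⟨0, hD⟩).1
    by_contra h
    nlinarith
  have h1 : b ⬝ᵥ w 1 = 1 := by
    have := Int.le_of_dvd one_pos hdvd; omega
  funext i
  rw [hbi i, h1, mul_one]

lemma lower_core (n : ℕ) (hn : 1 ≤ n) : ∃ C1 : ℕ, 1 ≤ C1 ∧ ∀ s r : ℕ, 1 ≤ s →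
    C1 * s ^ (n + 2) ≤ r → s ^ (n * (n + 1)) ≤ 8 * (Vd (n+1) r).ncard := by
  obtain ⟨C, hC⟩ : ∃ C, C = 16 * ((n + 1) * (2 * 6 ^ n)) * (16 * n) ^ n := ⟨_, rfl⟩
  obtain ⟨E, hE⟩ : ∃ E, E = 16 * (n + 1 + 2 * n * C) := ⟨_, rfl⟩
  obtain ⟨D, hD⟩ : ∃ D, D = n + 1 := ⟨_, rfl⟩
  have hCpos : 1 ≤ C := by
    rw [hC]; exact Nat.succ_le_of_lt (by positivity)
  have hEpos : 1 ≤ E := by omega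
  refine ⟨D * C * (1 + D * (E + 1) ^ 2) + 72 * D * E ^ 2 * (C * (D + 256 * D ^ 3)) + 1, by omega, ?_⟩
  intro s r hs hr
  have hspos : 1 ≤ s ^ (n+2) := Nat.one_le_pow _ _ hs
  rw [add_mul, add_mul] at hr
  have hL : 1 ≤ E * s := Nat.mul_pos hEpos hs
  have c1 : (n+1) * (C * s ^ n) * (1 + (n+1) * (E * s + 1) ^ 2) ≤ 2 * r := by
    rw [← hD]
    have : (1 + D * (E * s + 1) ^ 2) ≤ (1 + D * (E + 1) ^ 2) * s ^ 2 := by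
      have h1 : E * s + 1 ≤ (E + 1) * s := by nlinarith
      have h2 : 1 ≤ s ^ 2 := Nat.one_le_pow _ _ hs
      calc 1 + D * (E * s + 1) ^ 2 ≤ s ^ 2 + D * ((E + 1) * s) ^ 2 := by gcongr
        _ = _ := by ring
    calc D * (C * s ^ n) * (1 + D * (E * s + 1) ^ 2)
        ≤ D * (C * s ^ n) * ((1 + D * (E + 1) ^ 2) * s ^ 2) := by gcongr
      _ = D * C * (1 + D * (E + 1) ^ 2) * s ^ (n + 2) := by ring
      _ ≤ 2 * r := by omega
  have c2 : 72 * (n+1) * (E * s) ^ 2 * ((C * s ^ n) * ((n+1) + 256 * (n+1) ^ 3)) < r := by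
    rw [← hD]
    calc 72 * D * (E * s) ^ 2 * ((C * s ^ n) * (D + 256 * D ^ 3))
        = 72 * D * E ^ 2 * (C * (D + 256 * D ^ 3)) * s ^ (n + 2) := by ring
      _ < r := by omega
  obtain ⟨T, hT, hTc⟩ := count_good hn (C * s ^ n) (16 * n * s)
    (le_of_eq (by rw [hC, mul_pow (16 * n) s]; ring)) (by nlinarith)
  have hrep : ∀ a ∈ T, ∀ k : ℤ, |k| ≤ ((n + 1 : ℕ) : ℤ) * ((C * s ^ n : ℕ) : ℤ) →
      ∃ w : Fin (n+1) → ℤ, a ⬝ᵥ w = k ∧ ∀ i, |w i| ≤ ((E * s : ℕ) : ℤ) := by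
    intro a ha k hk
    obtain ⟨g1, g2, g3, g4⟩ := hT a ha
    obtain ⟨w, hw, hwL⟩ := short_reps hn s (C * s ^ n) C a g1 g2 g3 hs
      (by gcongr; omega) (by push_cast at g4; exact g4) k (by push_cast at hk ⊢; exact hk)
    refine ⟨w, hw, fun i => (hwL i).trans (le_of_eq ?_)⟩
    rw [hE]; push_cast; ring
  have hex : ∀ a : Fin (n+1) → ℤ, ∃ v : Fin (n+1) → ℤ, a ∈ T → v ∈ Vd (n+1) r ∧
      (r:ℝ) * √(∑ i, (a i : ℝ) ^ 2) - 2 ≤ ∑ i, (a i : ℝ) * v i ∧ ∑ i, (v i : ℝ) ^ 2 ≤ (r:ℝ) ^ 2 := by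
    intro a
    by_cases ha : a ∈ T
    · obtain ⟨v, h1, h2⟩ := exist_vertex (by omega) r (C * s ^ n) (E * s) a (hT a ha).1 (hrep a ha) c1
      exact ⟨v, fun _ => ⟨h1, h2⟩⟩
    · exact ⟨0, fun h => absurd h ha⟩
  choose f hf using hex
  have hcard : T.card ≤ (Vd (n+1) r).ncard := by
    rw [← Set.ncard_coe_finset]
    refine Set.ncard_le_ncard_of_injOn f (fun a ha => (hf a ha).1) ?_ (Vd_finite _ _)
    intro a ha b hb hab
    have h1 := hf a ha
    have h2 := hf b hb
    rw [← hab] at h2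
    exact inj_vertex (by omega) r (C * s ^ n) (E * s) hL a b (f a) (hT a ha).1 (hT b hb).1
      ⟨0, (hT a ha).2.1⟩ (hT b hb).2.2.1 (hrep a ha) c2 h1.2.1 h2.2.1 h1.2.2
  calc s ^ (n * (n+1)) = (s ^ n) ^ (n+1) := by rw [pow_mul]
    _ ≤ (C * s ^ n) ^ (n+1) := by gcongr; exact Nat.le_mul_of_pos_left _ hCpos
    _ ≤ 8 * T.card := hTc
    _ ≤ _ := by omega

lemma Vd_pos (d r : ℕ) : 1 ≤ (Vd d r).ncard := by
  have h0 : (0 : Fin d → ℝ) ∈ latS d r := ⟨0, by simp, by funext i; simp⟩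
  obtain ⟨e, he, -⟩ := exists_extreme_max (convexHull ℝ (latS d r))
    ((latS_finite d r).isCompact_convexHull (𝕜 := ℝ)) ⟨_, subset_convexHull ℝ _ h0⟩ 0
  obtain ⟨v, hv, rfl⟩ := extremePoints_convexHull_subset he
  exact (Set.ncard_pos (Vd_finite d r)).2 ⟨v, mem_Vd.2 he⟩

lemma lower_bound (d : ℕ) (hd : 2 ≤ d) : ∃ c₁ : ℝ, 0 < c₁ ∧ ∀ r : ℕ, 1 ≤ r →
    c₁ * (r : ℝ) ^ (((d : ℝ) * ((d : ℝ) - 1)) / ((d : ℝ) + 1)) ≤ (Set.ncard (Vd d r) : ℝ) := by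
  obtain ⟨n, rfl⟩ : ∃ n, d = n + 1 := ⟨d - 1, by omega⟩
  have hn : 1 ≤ n := by omega
  obtain ⟨C, hC, hcore⟩ := lower_core n hn
  set ε : ℝ := ((((n+1:ℕ) : ℝ) * (((n+1:ℕ) : ℝ) - 1)) / (((n+1:ℕ) : ℝ) + 1)) with hε
  have hε' : ε = (n * (n+1) : ℝ) / (n + 2) := by rw [hε]; push_cast; congr 1 <;> ring
  have hε0 : 0 ≤ ε := by rw [hε']; positivity
  set M : ℝ := (C:ℝ) * 2 ^ (n+2) with hM
  have hM0 : 0 < M := by positivity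
  have hMp : 0 < M ^ ε := Real.rpow_pos_of_pos hM0 _
  refine ⟨1 / (8 * M ^ ε), by positivity, fun r hr => ?_⟩
  rw [div_mul_eq_mul_div, one_mul, div_le_iff₀ (by positivity)]
  let s := Nat.findGreatest (fun s => C * s ^ (n+2) ≤ r) r
  have hs1 : C * s ^ (n+2) ≤ r :=
    Nat.findGreatest_spec (P := fun s => C * s ^ (n+2) ≤ r) (Nat.zero_le r) (by simp)
  have hs2 : r < C * (s+1) ^ (n+2) := by
    by_contra h
    push Not at h
    have h1 : s + 1 ≤ r := by
      calc s + 1 = (s+1)^1 := (pow_one _).symm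
        _ ≤ (s+1)^(n+2) := Nat.pow_le_pow_right (by omega) (by omega)
        _ ≤ C * (s+1)^(n+2) := Nat.le_mul_of_pos_left _ hC
        _ ≤ r := h
    have := Nat.le_findGreatest (P := fun s => C * s ^ (n+2) ≤ r) h1 h
    change s + 1 ≤ s at this
    omega
  have hVpos : (1:ℝ) ≤ (Vd (n+1) r).ncard := by exact_mod_cast Vd_pos (n+1) r
  by_cases hs : s = 0
  · rw [hs] at hs2
    have h1 : (r:ℝ) ≤ M := by
      have : (r:ℝ) ≤ C := by exact_mod_cast (by simpa using hs2.le)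
      refine this.trans (le_mul_of_one_le_right (by positivity) (one_le_pow₀ (by norm_num)))
    have h2 : (r:ℝ) ^ ε ≤ M ^ ε := Real.rpow_le_rpow (by positivity) h1 hε0
    nlinarith
  · have hs' : 1 ≤ s := by omega
    have h1 : (r:ℝ) ≤ M * (s:ℝ) ^ (n+2) := by
      have : (r:ℝ) ≤ C * ((s:ℝ)+1) ^ (n+2) := by exact_mod_cast hs2.le
      refine this.trans ?_
      rw [hM, mul_assoc, ← mul_pow]
      have : (1:ℝ) ≤ s := by exact_mod_cast hs'
      gcongr
      linarith
    have h2 : (r:ℝ) ^ ε ≤ M ^ ε * (s:ℝ) ^ (n * (n+1)) := by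
      refine (Real.rpow_le_rpow (by positivity) h1 hε0).trans (le_of_eq ?_)
      rw [Real.mul_rpow hM0.le (by positivity), ← Real.rpow_natCast (s:ℝ) (n+2), ← Real.rpow_mul (by positivity),
        ← Real.rpow_natCast (s:ℝ) (n * (n+1))]
      congr 2
      rw [hε']; push_cast; field_simp
    have h3 : (s:ℝ) ^ (n * (n+1)) ≤ 8 * ((Vd (n+1) r).ncard : ℝ) := by
      exact_mod_cast hcore s r hs' hs1
    calc (r:ℝ) ^ ε ≤ M ^ ε * (s:ℝ) ^ (n * (n+1)) := h2
      _ ≤ M ^ ε * (8 * ((Vd (n+1) r).ncard : ℝ)) := by gcongr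
      _ = _ := by ring

/-- Bárány–Larman: for every constant dimension `d ≥ 2`,
`|V_d(r)| = Θ(r^{d(d−1)/(d+1)})`; in particular for `d = 2` it is `Θ(r^{2/3})`. -/
theorem stmt10 (d : ℕ) (hd : 2 ≤ d) :
    ∃ c₁ c₂ : ℝ, 0 < c₁ ∧ 0 < c₂ ∧ ∀ r : ℕ, 1 ≤ r →
      c₁ * (r : ℝ) ^ (((d : ℝ) * ((d : ℝ) - 1)) / ((d : ℝ) + 1)) ≤ (Set.ncard (Vd d r) : ℝ) ∧
      (Set.ncard (Vd d r) : ℝ) ≤ c₂ * (r : ℝ) ^ (((d : ℝ) * ((d : ℝ) - 1)) / ((d : ℝ) + 1)) := by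
  obtain ⟨c₁, h1, h1'⟩ := lower_bound d hd
  obtain ⟨c₂, h2, h2'⟩ := upper_bound d hd
  exact ⟨c₁, c₂, h1, h2, fun r hr => ⟨h1' r hr, h2' r hr⟩⟩
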